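/- arXiv:1407.5882 — 16 statements merged into one kernel-verified Lean document; each statement's English description precedes it below -/
import Mathlib

section
/- There exists a computable integral domain A such that the set of irreducible elements of A is a computable predicate but the set of prime elements of A is not a computable predicate. Formally: there exist a type A, a Primcodable instance on A, and a commutative ring structure on A such that A is an integral domain, the functions (fun a b => a + b) and (fun a b => a * b) are computable (Computable₂), the predicate (fun a => Irreducible a) is a computable predicate (ComputablePred), and the predicate (fun a => Prime a) is not a computable predicate. -/
/-!
The domain is a monoid algebra `𝔽₂[M]`, where `M` is a submonoid of the multiplicative monoid of
positive integers. The full algebra `𝔽₂[ℕ₊]` is a polynomial ring in infinitely many variables, one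
for each prime number. An element of `𝔽₂[M]` is a finite subset of `M`, and is coded by the natural
number whose binary digits describe this subset; addition is symmetric difference and
multiplication is Dirichlet convolution.

Attach the programs to the odd primes, one program to each. The monoid `M` (`expMonoid`) consists of
the odd numbers together with the multiples of the numbers `p * 2 ^ (b + 1)`, where `p` is an odd
prime whose program halts within `b` steps. Membership in `M` is decidable.

Irreducibility is decidable: the largest exponent is multiplicative, so a factor of a nonzero
element `a` has largest exponent at most that of `a`, and its code is less than twice the code of
`a`. Hence only finitely many factorizations have to be tested; the only unit is `1`
(`irreducible_iff_bounded`).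

Primality is undecidable: the monomial `[p]` of an odd prime `p` is prime iff the program of `p`
does not halt. If it does not halt then `p * c ∈ M` implies `c ∈ M`, so that divisibility by `[p]`
is inherited from the polynomial ring, where `[p]` is a variable (`prime_mono`). If it halts within
`b` steps, then with `y = [2] ^ (b + 1)`, which is not in `𝔽₂[M]`, the product `([p] y) ([p] y)` is
divisible by `[p]` while `[p] y` is not (`not_prime_mono`).
-/

namespace PrimeIrred

open Primrec

/-! ### Primitive recursive tools -/

section Tools

variable {α : Type*} [Primcodable α]

lemma primrecPred_forall_lt {R : α → ℕ → Prop} {g : α → ℕ}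
    (hR : PrimrecPred fun q : α × ℕ => R q.1 q.2) (hg : Primrec g) :
    PrimrecPred fun a => ∀ x < g a, R a x := by
  have h : PrimrecRel fun (x : ℕ) (a : α) => R a x := hR.comp (snd.pair fst)
  exact (h.forall_mem_list.comp (list_range.comp hg) Primrec.id).of_eq (by simp)

lemma primrecPred_exists_lt {R : α → ℕ → Prop} {g : α → ℕ}
    (hR : PrimrecPred fun q : α × ℕ => R q.1 q.2) (hg : Primrec g) :
    PrimrecPred fun a => ∃ x < g a, R a x := by
  have h : PrimrecRel fun (x : ℕ) (a : α) => R a x := hR.comp (snd.pair fst)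
  exact (h.exists_mem_list.comp (list_range.comp hg) Primrec.id).of_eq (by simp)

lemma primrec_sum_range {f : α → ℕ → ℕ} {g : α → ℕ}
    (hf : Primrec fun q : α × ℕ => f q.1 q.2) (hg : Primrec g) :
    Primrec fun a => ∑ i ∈ Finset.range (g a), f a i := by
  have h2 : Primrec₂ fun (a : α) (q : ℕ × ℕ) => q.2 + f a q.1 :=
    nat_add.comp (snd.comp snd) (hf.comp (fst.pair (fst.comp snd)))
  refine (nat_rec' hg (const 0) h2).of_eq fun a => ?_
  induction g a with
  | zero => rfl
  | succ n ih => rw [Finset.sum_range_succ, ← ih]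

lemma primrec_pow : Primrec₂ ((· ^ ·) : ℕ → ℕ → ℕ) :=
  Primrec₂.unpaired'.1 Nat.Primrec.pow

lemma primrecPred_testBit {f g : α → ℕ} (hf : Primrec f) (hg : Primrec g) :
    PrimrecPred fun a => (f a).testBit (g a) = true := by
  refine (Primrec.eq.comp (nat_mod.comp (nat_div.comp hf (primrec_pow.comp (const 2) hg))
    (const 2)) (const 1)).of_eq fun a => ?_
  simp [Nat.testBit_eq_decide_div_mod_eq]

lemma primrecPred_dvd {f g : α → ℕ} (hf : Primrec f) (hg : Primrec g) :
    PrimrecPred fun a => f a ∣ g a :=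
  (Primrec.eq.comp (nat_mod.comp hg hf) (const 0)).of_eq fun a => by
    rw [Nat.dvd_iff_mod_eq_zero]

lemma primrecPred_imp {p q : α → Prop} (hp : PrimrecPred p) (hq : PrimrecPred q) :
    PrimrecPred fun a => p a → q a :=
  (hp.not.or hq).of_eq fun a => by tauto

lemma primrecPred_prime : PrimrecPred Nat.Prime := by
  have h : PrimrecPred fun p : ℕ => 2 ≤ p ∧ ∀ m < p, m ∣ p → m = 1 :=
    (nat_le.comp (const 2) Primrec.id).and <| primrecPred_forall_lt
      (primrecPred_imp (primrecPred_dvd snd fst) (Primrec.eq.comp snd (const 1))) Primrec.id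
  refine h.of_eq fun p => ?_
  rw [Nat.prime_def_lt]

lemma primrec_count_prime : Primrec (Nat.count Nat.Prime) := by
  refine (primrec_sum_range (f := fun (_ : ℕ) i => if i.Prime then 1 else 0) (g := id)
    (Primrec.ite (primrecPred_prime.comp snd) (const 1) (const 0)) Primrec.id).of_eq fun n => ?_
  rw [Nat.count_eq_card_filter_range, Finset.card_filter]; rfl

end Tools

/-! ### Binary codes of finite sets of natural numbers -/

/-- The natural number below `2 ^ N` whose binary digits are given by `P`. -/
def bitSum (N : ℕ) (P : ℕ → Prop) [DecidablePred P] : ℕ :=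
  ∑ n ∈ Finset.range N, if P n then 2 ^ n else 0

lemma bitSum_lt (N : ℕ) (P : ℕ → Prop) [DecidablePred P] : bitSum N P < 2 ^ N := by
  induction N with
  | zero => simp [bitSum]
  | succ n ih =>
    rw [bitSum, Finset.sum_range_succ, ← bitSum, pow_succ]
    split_ifs <;> omega

lemma testBit_bitSum (N : ℕ) (P : ℕ → Prop) [DecidablePred P] (i : ℕ) :
    (bitSum N P).testBit i = true ↔ i < N ∧ P i := by
  induction N with
  | zero => simp [bitSum]
  | succ n ih =>
    have hlt := bitSum_lt n P
    rw [bitSum, Finset.sum_range_succ, ← bitSum]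
    by_cases hP : P n
    · rw [if_pos hP, add_comm]
      rcases lt_trichotomy i n with h | rfl | h
      · rw [Nat.testBit_two_pow_add_gt h, ih]
        simp [h, Nat.lt_succ_of_lt h]
      · rw [Nat.testBit_two_pow_add_eq, Nat.testBit_lt_two_pow hlt]
        simp [hP]
      · have : 2 ^ n + bitSum n P < 2 ^ i := by
          calc _ < 2 ^ (n + 1) := by rw [pow_succ]; omega
            _ ≤ _ := Nat.pow_le_pow_right (by norm_num) h
        rw [Nat.testBit_lt_two_pow this]
        simp; omega
    · rw [if_neg hP, add_zero, ih]
      constructor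
      · rintro ⟨h1, h2⟩; exact ⟨by omega, h2⟩
      · rintro ⟨h1, h2⟩
        refine ⟨?_, h2⟩
        rcases Nat.lt_succ_iff_lt_or_eq.1 h1 with h | rfl
        · exact h
        · exact absurd h2 hP

lemma primrec_bitSum {α : Type*} [Primcodable α] {P : α → ℕ → Prop}
    [∀ a, DecidablePred (P a)] {g : α → ℕ}
    (hP : PrimrecPred fun q : α × ℕ => P q.1 q.2) (hg : Primrec g) :
    Primrec fun a => bitSum (g a) (P a) :=
  primrec_sum_range (Primrec.ite hP (primrec_pow.comp (const 2) snd) (const 0)) hg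

lemma lt_of_testBit {a i : ℕ} (h : a.testBit i = true) : i < a :=
  Nat.lt_two_pow_self.trans_le (Nat.ge_two_pow_of_testBit h)

/-- Symmetric difference of the coded sets. -/
def addCode (a b : ℕ) : ℕ :=
  bitSum (a + b) fun i => ¬(a.testBit i = true ↔ b.testBit i = true)

/-- The number of factorizations `n = x * y` with `x` in the set coded by `a` and `y` in the set
coded by `b`, for `n ≠ 0`. -/
def coef (a b n : ℕ) : ℕ :=
  ∑ x ∈ Finset.range (n + 1),
    if x ∣ n ∧ a.testBit x = true ∧ b.testBit (n / x) = true then 1 else 0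

/-- Code of the Dirichlet product over `ZMod 2` of the coded indicator functions. -/
def mulCode (a b : ℕ) : ℕ :=
  bitSum (a * b) fun n => n ≠ 0 ∧ coef a b n % 2 = 1

lemma primrec_addCode : Primrec₂ addCode := by
  have h1 : PrimrecPred fun q : (ℕ × ℕ) × ℕ => q.1.1.testBit q.2 = true :=
    primrecPred_testBit (fst.comp fst) snd
  have h2 : PrimrecPred fun q : (ℕ × ℕ) × ℕ => q.1.2.testBit q.2 = true :=
    primrecPred_testBit (snd.comp fst) snd
  refine primrec_bitSum
    (P := fun (q : ℕ × ℕ) i => ¬(q.1.testBit i = true ↔ q.2.testBit i = true)) ?_ nat_add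
  exact ((primrecPred_imp h1 h2).and (primrecPred_imp h2 h1)).not.of_eq fun q => by tauto

lemma primrec_mulCode : Primrec₂ mulCode := by
  have hc : Primrec fun q : (ℕ × ℕ) × ℕ => coef q.1.1 q.1.2 q.2 := by
    refine primrec_sum_range (f := fun (q : (ℕ × ℕ) × ℕ) x =>
      if x ∣ q.2 ∧ q.1.1.testBit x = true ∧ q.1.2.testBit (q.2 / x) = true then 1 else 0)
      (Primrec.ite ?_ (const 1) (const 0)) (succ.comp snd)
    exact (primrecPred_dvd snd (snd.comp fst)).and
      ((primrecPred_testBit (fst.comp (fst.comp fst)) snd).and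
        (primrecPred_testBit (snd.comp (fst.comp fst)) (nat_div.comp (snd.comp fst) snd)))
  refine primrec_bitSum (P := fun (q : ℕ × ℕ) n => n ≠ 0 ∧ coef q.1 q.2 n % 2 = 1) ?_ nat_mul
  exact (Primrec.eq.comp snd (const 0)).not.and
    (Primrec.eq.comp (nat_mod.comp hc (const 2)) (const 1))

/-! ### Codes as Dirichlet polynomials -/

/-- The arithmetic function with values in `ZMod 2` which is the indicator function of the set of
nonzero elements of the set coded by `a`. -/
def toArith (a : ℕ) : ArithmeticFunction (ZMod 2) :=
  ⟨fun i => if i ≠ 0 ∧ a.testBit i = true then 1 else 0, by simp⟩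

lemma toArith_apply (a i : ℕ) :
    toArith a i = if i ≠ 0 ∧ a.testBit i = true then 1 else 0 := rfl

lemma toArith_add (a b : ℕ) : toArith (addCode a b) = toArith a + toArith b := by
  ext i
  rw [ArithmeticFunction.add_apply]
  have hbit : (addCode a b).testBit i = true ↔ ¬(a.testBit i = true ↔ b.testBit i = true) := by
    rw [addCode, testBit_bitSum]
    refine ⟨And.right, fun h => ⟨?_, h⟩⟩
    by_cases ha : a.testBit i = true
    · have := lt_of_testBit ha; omega
    · by_cases hb : b.testBit i = true
      · have := lt_of_testBit hb; omega
      · tauto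
  simp only [toArith_apply, hbit]
  by_cases hi : i = 0 <;> by_cases ha : a.testBit i = true <;>
    by_cases hb : b.testBit i = true <;> simp [hi, ha, hb]
  rfl

lemma toArith_mul_apply (a b n : ℕ) (hn : n ≠ 0) :
    (toArith a * toArith b) n = (coef a b n : ZMod 2) := by
  rw [ArithmeticFunction.mul_apply,
    Nat.sum_divisorsAntidiagonal (fun x y => toArith a x * toArith b y), coef, Nat.cast_sum]
  have hs : n.divisors ⊆ Finset.range (n + 1) := fun x hx => by
    have := Nat.divisor_le hx
    simp; omega
  rw [← Finset.sum_subset hs]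
  · refine Finset.sum_congr rfl fun x hx => ?_
    have hd := Nat.dvd_of_mem_divisors hx
    have hx0 : x ≠ 0 := fun h => hn (by simpa [h] using hd)
    by_cases ha : a.testBit x = true <;> by_cases hb : b.testBit (n / x) = true <;>
      simp [toArith_apply, ha, hb, hd, hx0, Nat.divisor_le hx]
  · intro x _ hx
    have : ¬ x ∣ n := fun h => hx (Nat.mem_divisors.2 ⟨h, hn⟩)
    simp [this]

lemma zmod_two_cast (k : ℕ) : (k : ZMod 2) = if k % 2 = 1 then 1 else 0 := by
  split_ifs with h
  · exact (ZMod.natCast_eq_one_iff_odd).2 (Nat.odd_iff.2 h)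
  · exact (ZMod.natCast_eq_zero_iff_even).2 (Nat.even_iff.2 (by omega))

lemma toArith_mul (a b : ℕ) : toArith (mulCode a b) = toArith a * toArith b := by
  ext n
  rcases eq_or_ne n 0 with rfl | hn
  · simp
  rw [toArith_mul_apply a b n hn, zmod_two_cast, toArith_apply]
  have : (mulCode a b).testBit n = true ↔ coef a b n % 2 = 1 := by
    rw [mulCode, testBit_bitSum]
    refine ⟨fun h => h.2.2, fun h => ⟨?_, hn, h⟩⟩
    have h0 : coef a b n ≠ 0 := by omega
    obtain ⟨x, -, hx⟩ := Finset.exists_ne_zero_of_sum_ne_zero h0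
    obtain ⟨hd, ha, hb⟩ : x ∣ n ∧ a.testBit x = true ∧ b.testBit (n / x) = true := by
      by_contra hc; exact hx (if_neg hc)
    have h1 := lt_of_testBit ha
    have h2 := lt_of_testBit hb
    calc n = x * (n / x) := (Nat.mul_div_cancel' hd).symm
      _ < a * b := Nat.mul_lt_mul'' h1 h2
  simp [this, hn]

/-- Multiplying by the monomial `[p]` shifts coefficients. -/
lemma toArith_two_pow_mul (p : ℕ) (hp : p ≠ 0) (f : ArithmeticFunction (ZMod 2)) (i : ℕ) :
    (toArith (2 ^ p) * f) i = if p ∣ i then f (i / p) else 0 := by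
  rcases eq_or_ne i 0 with rfl | hi
  · simp
  have hX : ∀ x, toArith (2 ^ p) x = if x = p then 1 else 0 := fun x => by
    rw [toArith_apply]
    refine if_congr ?_ rfl rfl
    rw [Nat.testBit_two_pow, decide_eq_true_iff]
    exact ⟨fun h => h.2.symm, fun h => ⟨h ▸ hp, h.symm⟩⟩
  rw [ArithmeticFunction.mul_apply,
    Nat.sum_divisorsAntidiagonal (fun x y => toArith (2 ^ p) x * f y)]
  simp [hX, hi]

lemma toArith_two : toArith 2 = 1 := by
  ext i
  rw [ArithmeticFunction.one_apply, toArith_apply]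
  refine if_congr ?_ rfl rfl
  have h : Nat.testBit 2 i = decide (1 = i) := Nat.testBit_two_pow (n := 1)
  rw [h, decide_eq_true_iff]
  omega

lemma toArith_zero : toArith 0 = 0 := by
  ext i; simp [toArith_apply]

/-! ### The monoid of admissible exponents -/

open Nat.Partrec in
/-- The program attached to the prime `p` halts on input `0` within `b` steps. The program attached
to the `k`-th odd prime is the `k`-th program (both counted from `0`), since the number of primes
below the `k`-th odd prime is `k + 1`. -/
def Halts (p b : ℕ) : Prop :=
  (Code.evaln b (Denumerable.ofNat Code (Nat.count Nat.Prime p - 1)) 0).isSome = true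

/-- The even numbers `p * 2 ^ (b + 1)` with `p` an odd prime whose program halts within `b`
steps. -/
def IsGen (d : ℕ) : Prop :=
  ∃ p b, p.Prime ∧ p ≠ 2 ∧ Halts p b ∧ d = p * 2 ^ (b + 1)

/-- The multiplicative monoid of the odd numbers and all positive multiples of numbers satisfying
`IsGen`. -/
def expMonoid : Submonoid ℕ where
  carrier := {m | m ≠ 0 ∧ (m % 2 = 1 ∨ ∃ d, IsGen d ∧ d ∣ m)}
  one_mem' := ⟨one_ne_zero, Or.inl rfl⟩
  mul_mem' := by
    rintro a b ⟨ha, ha'⟩ ⟨hb, hb'⟩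
    refine ⟨mul_ne_zero ha hb, ?_⟩
    rcases ha' with ha' | ⟨d, hd, hda⟩
    · rcases hb' with hb' | ⟨d, hd, hdb⟩
      · left; rw [Nat.mul_mod, ha', hb']
      · exact Or.inr ⟨d, hd, hdb.mul_left a⟩
    · exact Or.inr ⟨d, hd, hda.mul_right b⟩

lemma mem_expMonoid {m : ℕ} :
    m ∈ expMonoid ↔ m ≠ 0 ∧ (m % 2 = 1 ∨ ∃ d, IsGen d ∧ d ∣ m) := Iff.rfl

lemma primrecPred_isGen : PrimrecPred IsGen := by
  have hh : PrimrecPred fun q : (ℕ × ℕ) × ℕ => Halts q.1.2 q.2 := by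
    refine Primrec.eq.comp (option_isSome.comp (Nat.Partrec.Code.primrec_evaln.comp
      ((snd.pair ((Primrec.ofNat _).comp
        (nat_sub.comp (primrec_count_prime.comp (snd.comp fst)) (const 1)))).pair (const 0))))
      (const true)
  have h : PrimrecPred fun d : ℕ => ∃ p < d + 1, ∃ b < d + 1,
      p.Prime ∧ p ≠ 2 ∧ Halts p b ∧ d = p * 2 ^ (b + 1) := by
    refine primrecPred_exists_lt (primrecPred_exists_lt (R := fun (q : ℕ × ℕ) b =>
      q.2.Prime ∧ q.2 ≠ 2 ∧ Halts q.2 b ∧ q.1 = q.2 * 2 ^ (b + 1)) ?_ (succ.comp fst)) succ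
    exact (primrecPred_prime.comp (snd.comp fst)).and <|
      (Primrec.eq.comp (snd.comp fst) (const 2)).not.and <| hh.and <|
      Primrec.eq.comp (fst.comp fst)
        (nat_mul.comp (snd.comp fst) (primrec_pow.comp (const 2) (succ.comp snd)))
  refine h.of_eq fun d => ⟨?_, ?_⟩
  · rintro ⟨p, -, b, -, h⟩; exact ⟨p, b, h⟩
  · rintro ⟨p, b, hp, h2, hb, rfl⟩
    have h1 : b + 1 < 2 ^ (b + 1) := Nat.lt_two_pow_self
    have h3 := hp.pos
    exact ⟨p, by nlinarith, b, by nlinarith, hp, h2, hb, rfl⟩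

lemma primrecPred_mem : PrimrecPred fun m => m ∈ expMonoid := by
  have h : PrimrecPred fun m : ℕ =>
      m ≠ 0 ∧ (m % 2 = 1 ∨ ∃ d < m + 1, IsGen d ∧ d ∣ m) :=
    (Primrec.eq.comp Primrec.id (const 0)).not.and <|
      (Primrec.eq.comp (nat_mod.comp Primrec.id (const 2)) (const 1)).or <|
      primrecPred_exists_lt ((primrecPred_isGen.comp snd).and (primrecPred_dvd snd fst)) succ
  refine h.of_eq fun m => ?_
  rw [mem_expMonoid]
  refine and_congr_right fun hm => or_congr_right ⟨?_, ?_⟩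
  · rintro ⟨d, -, h⟩; exact ⟨d, h⟩
  · rintro ⟨d, hd, hdm⟩
    exact ⟨d, Nat.lt_succ_of_le (Nat.le_of_dvd (Nat.pos_of_ne_zero hm) hdm), hd, hdm⟩

lemma two_pow_notMem (k : ℕ) : 2 ^ (k + 1) ∉ expMonoid := by
  rintro ⟨-, h | ⟨d, ⟨p, b, hp, h2, -, rfl⟩, hd⟩⟩
  · rw [pow_succ] at h; omega
  · have : p ∣ 2 ^ (k + 1) := (Dvd.intro _ rfl).trans hd
    exact h2 ((Nat.prime_dvd_prime_iff_eq hp Nat.prime_two).1 (hp.dvd_of_dvd_pow this))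

lemma prime_mem {p : ℕ} (hp : p.Prime) (h2 : p ≠ 2) : p ∈ expMonoid :=
  ⟨hp.ne_zero, Or.inl (hp.eq_two_or_odd.resolve_left h2)⟩

/-- If the program of the odd prime `p` does not halt then `p` can be cancelled from exponents: the generator
witnessing that an even multiple of `p` is admissible is coprime to `p`. -/
lemma mem_of_mul_mem {p c : ℕ} (hp : p.Prime) (hp2 : p ≠ 2) (hK : ∀ b, ¬ Halts p b)
    (h : p * c ∈ expMonoid) : c ∈ expMonoid := by
  obtain ⟨h0, h⟩ := h
  refine ⟨right_ne_zero_of_mul h0, ?_⟩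
  rcases h with h | ⟨d, ⟨q, b, hq, h2, hb, rfl⟩, hd⟩
  · left
    by_contra hc
    rw [Nat.mul_mod, show c % 2 = 0 by omega] at h
    simp at h
  · refine Or.inr ⟨_, ⟨q, b, hq, h2, hb, rfl⟩, ?_⟩
    have hqp : q ≠ p := by rintro rfl; exact hK b hb
    have hco : Nat.Coprime (q * 2 ^ (b + 1)) p :=
      Nat.Coprime.mul_left ((Nat.coprime_primes hq hp).2 hqp)
        (Nat.Coprime.pow_left _ ((Nat.coprime_primes Nat.prime_two hp).2 hp2.symm))
    exact hco.dvd_of_dvd_mul_left hd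

/-! ### The ring -/

/-- `a` codes a finite set of admissible exponents. -/
def Good (a : ℕ) : Prop := ∀ i, a.testBit i = true → i ∈ expMonoid

lemma primrecPred_good : PrimrecPred Good := by
  have h : PrimrecPred fun a : ℕ => ∀ i < a, a.testBit i = true → i ∈ expMonoid :=
    primrecPred_forall_lt
      (primrecPred_imp (primrecPred_testBit fst snd) (primrecPred_mem.comp snd)) Primrec.id
  exact h.of_eq fun a => ⟨fun h i hi => h i (lt_of_testBit hi) hi, fun h i _ => h i⟩

lemma Good.ne_zero {a i : ℕ} (ha : Good a) (h : a.testBit i = true) : i ≠ 0 := (ha i h).1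

lemma toArith_ne_zero_iff {a i : ℕ} (ha : Good a) : toArith a i ≠ 0 ↔ a.testBit i = true := by
  rw [toArith_apply]
  constructor
  · intro h
    by_contra hc
    exact h (if_neg fun h' => hc h'.2)
  · intro h
    rw [if_pos ⟨ha.ne_zero h, h⟩]
    exact one_ne_zero

lemma toArith_eq_one {a i : ℕ} (ha : Good a) (h : a.testBit i = true) : toArith a i = 1 :=
  if_pos ⟨ha.ne_zero h, h⟩

lemma toArith_injOn {a b : ℕ} (ha : Good a) (hb : Good b) (h : toArith a = toArith b) :
    a = b := by
  refine Nat.eq_of_testBit_eq fun i => ?_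
  rw [Bool.eq_iff_iff, ← toArith_ne_zero_iff ha, ← toArith_ne_zero_iff hb, h]

lemma good_zero : Good 0 := fun i h => by simp at h

lemma good_two_pow {m : ℕ} (hm : m ∈ expMonoid) : Good (2 ^ m) := fun i h => by
  rw [Nat.testBit_two_pow, decide_eq_true_iff] at h
  exact h ▸ hm

lemma good_addCode {a b : ℕ} (ha : Good a) (hb : Good b) : Good (addCode a b) := fun i h => by
  rw [addCode, testBit_bitSum] at h
  by_cases h1 : a.testBit i = true
  · exact ha i h1
  · by_cases h2 : b.testBit i = true
    · exact hb i h2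
    · tauto

lemma good_mulCode {a b : ℕ} (ha : Good a) (hb : Good b) : Good (mulCode a b) := fun i h => by
  rw [mulCode, testBit_bitSum] at h
  have h0 : coef a b i ≠ 0 := by omega
  obtain ⟨x, -, hx⟩ := Finset.exists_ne_zero_of_sum_ne_zero h0
  obtain ⟨hd, h1, h2⟩ : x ∣ i ∧ a.testBit x = true ∧ b.testBit (i / x) = true := by
    by_contra hc; exact hx (if_neg hc)
  rw [← Nat.mul_div_cancel' hd]
  exact mul_mem (ha x h1) (hb _ h2)

/-- The underlying type of the ring: natural numbers whose binary digits code a finite set of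
admissible exponents, standing for the sum of the corresponding monomials over `ZMod 2`. -/
abbrev Dom : Type := {a : ℕ // Good a}

noncomputable instance : DecidablePred Good := Classical.decPred _

noncomputable instance : Primcodable Dom := Primcodable.subtype primrecPred_good

/-- The ring of Dirichlet polynomials over `ZMod 2` with admissible exponents. -/
def polyRing : Subring (ArithmeticFunction (ZMod 2)) where
  carrier := Set.range fun a : Dom => toArith a.1
  zero_mem' := ⟨⟨0, good_zero⟩, toArith_zero⟩
  one_mem' := ⟨⟨2 ^ 1, good_two_pow (one_mem _)⟩, toArith_two⟩
  add_mem' := by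
    rintro _ _ ⟨a, rfl⟩ ⟨b, rfl⟩
    exact ⟨⟨_, good_addCode a.2 b.2⟩, toArith_add _ _⟩
  mul_mem' := by
    rintro _ _ ⟨a, rfl⟩ ⟨b, rfl⟩
    exact ⟨⟨_, good_mulCode a.2 b.2⟩, toArith_mul _ _⟩
  neg_mem' := by
    rintro _ ⟨a, rfl⟩
    refine ⟨a, ?_⟩
    ext i
    rw [ArithmeticFunction.neg_apply, ZMod.neg_eq_self_mod_two]

/-- Codes correspond bijectively to Dirichlet polynomials. -/
noncomputable def codeEquiv : Dom ≃ polyRing :=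
  Equiv.ofInjective (fun a : Dom => toArith a.1)
    fun a b h => Subtype.ext (toArith_injOn a.2 b.2 h)

noncomputable instance : CommRing Dom := codeEquiv.commRing

/-- The embedding of the ring into the Dirichlet ring. -/
noncomputable def embed : Dom →+* ArithmeticFunction (ZMod 2) :=
  polyRing.subtype.comp codeEquiv.ringEquiv.toRingHom

lemma embed_apply (a : Dom) : embed a = toArith a.1 := rfl

lemma embed_injective : Function.Injective embed :=
  fun a b h => Subtype.ext (toArith_injOn a.2 b.2 h)

lemma val_add (a b : Dom) : (a + b).1 = addCode a.1 b.1 :=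
  toArith_injOn (a + b).2 (good_addCode a.2 b.2) <| by
    rw [← embed_apply, map_add, toArith_add]; rfl

lemma val_mul (a b : Dom) : (a * b).1 = mulCode a.1 b.1 :=
  toArith_injOn (a * b).2 (good_mulCode a.2 b.2) <| by
    rw [← embed_apply, map_mul, toArith_mul]; rfl

lemma val_zero : (0 : Dom).1 = 0 :=
  toArith_injOn (0 : Dom).2 good_zero <| by rw [← embed_apply, map_zero, toArith_zero]

lemma val_one : (1 : Dom).1 = 2 :=
  toArith_injOn (1 : Dom).2 (good_two_pow (m := 1) (one_mem _)) <| by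
    rw [← embed_apply, map_one]; exact toArith_two.symm

/-- Let `P` be a property that holds for a product iff it holds for both factors. The product of the largest exponents
with property `P` in `a` and in `b` occurs in `a * b`, as no other pair of exponents of `a` and
`b` has the same product. -/
lemma exists_top (P : ℕ → Prop) (hP : ∀ x y, P (x * y) ↔ P x ∧ P y) (a b : Dom)
    (ha : ∃ i, a.1.testBit i = true ∧ P i) (hb : ∃ j, b.1.testBit j = true ∧ P j) :
    ∃ I J, a.1.testBit I = true ∧ P I ∧ (∀ i, a.1.testBit i = true → P i → i ≤ I) ∧
      b.1.testBit J = true ∧ P J ∧ (∀ j, b.1.testBit j = true → P j → j ≤ J) ∧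
      (a * b).1.testBit (I * J) = true := by
  have key : ∀ a : Dom, (∃ i, a.1.testBit i = true ∧ P i) → ∃ I, a.1.testBit I = true ∧ P I ∧
      ∀ i, a.1.testBit i = true → P i → i ≤ I := by
    classical
    intro a ⟨i, hi⟩
    have hs := Nat.findGreatest_spec (P := fun i => a.1.testBit i = true ∧ P i)
      (lt_of_testBit hi.1).le hi
    exact ⟨_, hs.1, hs.2, fun j hj hj' =>
      Nat.le_findGreatest (lt_of_testBit hj).le ⟨hj, hj'⟩⟩
  obtain ⟨I, hI, hPI, hImax⟩ := key a ha
  obtain ⟨J, hJ, hPJ, hJmax⟩ := key b hb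
  refine ⟨I, J, hI, hPI, hImax, hJ, hPJ, hJmax, ?_⟩
  have hI0 := a.2.ne_zero hI
  have hJ0 := b.2.ne_zero hJ
  rw [← toArith_ne_zero_iff (a * b).2, ← embed_apply, map_mul embed, embed_apply, embed_apply,
    ArithmeticFunction.mul_apply, Finset.sum_eq_single (I, J)]
  · rw [toArith_eq_one a.2 hI, toArith_eq_one b.2 hJ, one_mul]
    exact one_ne_zero
  · rintro ⟨x, y⟩ hxy hne
    by_contra hc
    have hx := (toArith_ne_zero_iff a.2).1 (left_ne_zero_of_mul hc)
    have hy := (toArith_ne_zero_iff b.2).1 (right_ne_zero_of_mul hc)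
    have hmul : x * y = I * J := (Nat.mem_divisorsAntidiagonal.1 hxy).1
    have hPxy := (hP x y).1 (hmul ▸ (hP I J).2 ⟨hPI, hPJ⟩)
    have hxI := hImax x hx hPxy.1
    have hyJ := hJmax y hy hPxy.2
    have hxI' : x = I := by
      by_contra h
      have : x < I := by omega
      have := Nat.mul_lt_mul_of_lt_of_le this hyJ (Nat.pos_of_ne_zero hJ0)
      omega
    subst hxI'
    exact hne (Prod.ext rfl (Nat.eq_of_mul_eq_mul_left (Nat.pos_of_ne_zero hI0) hmul))
  · intro h
    exact absurd (Nat.mem_divisorsAntidiagonal.2 ⟨rfl, mul_ne_zero hI0 hJ0⟩) h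

lemma exists_testBit {a : Dom} (ha : a ≠ 0) : ∃ i, a.1.testBit i = true ∧ True := by
  have : a.1 ≠ 0 := fun h => ha (Subtype.ext (h.trans val_zero.symm))
  exact ⟨_, Nat.testBit_log2 this, trivial⟩

/-- Degree estimate for a product in terms of codes. -/
lemma exists_degree {a b : Dom} (ha : a ≠ 0) (hb : b ≠ 0) :
    ∃ I J, I ≠ 0 ∧ J ≠ 0 ∧ a.1 < 2 ^ (I + 1) ∧ b.1 < 2 ^ (J + 1) ∧ 2 ^ (I * J) ≤ (a * b).1 := by
  obtain ⟨I, J, hI, -, hImax, hJ, -, hJmax, h⟩ :=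
    exists_top (fun _ => True) (by simp) a b (exists_testBit ha) (exists_testBit hb)
  refine ⟨I, J, a.2.ne_zero hI, b.2.ne_zero hJ, ?_, ?_, Nat.ge_two_pow_of_testBit h⟩
  · refine Nat.lt_pow_two_of_testBit _ fun i hi => ?_
    by_contra hc
    have := hImax i (by simpa using hc) trivial
    omega
  · refine Nat.lt_pow_two_of_testBit _ fun i hi => ?_
    by_contra hc
    have := hJmax i (by simpa using hc) trivial
    omega

instance : Nontrivial Dom :=
  ⟨0, 1, fun h => by have := congrArg Subtype.val h; rw [val_zero, val_one] at this; omega⟩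

instance : NoZeroDivisors Dom where
  eq_zero_or_eq_zero_of_mul_eq_zero := by
    intro a b h
    by_contra! hc
    obtain ⟨I, J, -, -, -, -, hle⟩ := exists_degree hc.1 hc.2
    rw [h, val_zero] at hle
    have : 0 < 2 ^ (I * J) := by positivity
    omega

instance : IsDomain Dom := NoZeroDivisors.to_isDomain _

/-! ### Irreducible elements -/

lemma lt_of_mul {a b : Dom} (h : a * b ≠ 0) : a.1 < 2 * (a * b).1 := by
  obtain ⟨I, J, hI, hJ, h1, -, h3⟩ :=
    exists_degree (left_ne_zero_of_mul h) (right_ne_zero_of_mul h)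
  have : 2 ^ I ≤ 2 ^ (I * J) :=
    Nat.pow_le_pow_right (by norm_num) (Nat.le_mul_of_pos_right _ (Nat.pos_of_ne_zero hJ))
  rw [pow_succ] at h1
  omega

lemma isUnit_iff {a : Dom} : IsUnit a ↔ a.1 = 2 := by
  constructor
  · intro h
    obtain ⟨b, hb⟩ := h.exists_right_inv
    have h4 := lt_of_mul (hb.trans_ne one_ne_zero)
    rw [hb, val_one] at h4
    have h0 : a.1 ≠ 0 := fun h => by
      have : a = 0 := Subtype.ext (h.trans val_zero.symm)
      simp [this] at hb
    -- codes of elements of the ring are even since `0` is not an admissible exponent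
    have heven : a.1.testBit 0 ≠ true := fun h => a.2.ne_zero h rfl
    rw [Nat.testBit_zero] at heven
    simp at heven
    omega
  · intro h
    rw [show a = 1 from Subtype.ext (h.trans val_one.symm)]
    exact isUnit_one

lemma irreducible_iff_bounded (a : Dom) :
    Irreducible a ↔ a.1 ≠ 0 ∧ a.1 ≠ 2 ∧ ∀ b < 2 * a.1, ∀ c < 2 * a.1,
      Good b → Good c → a.1 = mulCode b c → b = 2 ∨ c = 2 := by
  constructor
  · intro h
    refine ⟨fun h0 => h.ne_zero (Subtype.ext (h0.trans val_zero.symm)),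
      fun h2 => h.not_isUnit (isUnit_iff.2 h2), fun b _ c _ hb hc habc => ?_⟩
    have hm : a = (⟨b, hb⟩ : Dom) * ⟨c, hc⟩ := Subtype.ext (by rw [val_mul]; exact habc)
    have hu := h.isUnit_or_isUnit hm
    rwa [isUnit_iff, isUnit_iff] at hu
  · rintro ⟨h0, h2, h⟩
    refine ⟨fun hu => h2 (isUnit_iff.1 hu), fun b c habc => ?_⟩
    have hne : b * c ≠ 0 := fun hz => h0 (by rw [habc, hz, val_zero])
    rw [isUnit_iff, isUnit_iff]
    refine h b.1 (habc ▸ lt_of_mul hne) c.1 ?_ b.2 c.2 (habc ▸ val_mul b c)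
    rw [habc, mul_comm b c]
    exact lt_of_mul (mul_comm b c ▸ hne)

lemma primrec_val : Primrec (fun a : Dom => a.1) := subtype_val

lemma computablePred_irreducible : ComputablePred fun a : Dom => Irreducible a := by
  have h1 : PrimrecPred fun q : (ℕ × ℕ) × ℕ =>
      Good q.1.2 → Good q.2 → q.1.1 = mulCode q.1.2 q.2 → q.1.2 = 2 ∨ q.2 = 2 :=
    primrecPred_imp (primrecPred_good.comp (snd.comp fst)) <|
      primrecPred_imp (primrecPred_good.comp snd) <|
      primrecPred_imp (Primrec.eq.comp (fst.comp fst) (primrec_mulCode.comp (snd.comp fst) snd)) <|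
      (Primrec.eq.comp (snd.comp fst) (const 2)).or (Primrec.eq.comp snd (const 2))
  have hdouble : Primrec fun a : ℕ => 2 * a := nat_mul.comp (const 2) Primrec.id
  have h2 : PrimrecPred fun q : ℕ × ℕ => ∀ c < 2 * q.1,
      Good q.2 → Good c → q.1 = mulCode q.2 c → q.2 = 2 ∨ c = 2 :=
    primrecPred_forall_lt (R := fun (q : ℕ × ℕ) c =>
      Good q.2 → Good c → q.1 = mulCode q.2 c → q.2 = 2 ∨ c = 2) h1 (hdouble.comp fst)
  have h3 : PrimrecPred fun a : ℕ => ∀ b < 2 * a, ∀ c < 2 * a,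
      Good b → Good c → a = mulCode b c → b = 2 ∨ c = 2 :=
    primrecPred_forall_lt (R := fun a b => ∀ c < 2 * a,
      Good b → Good c → a = mulCode b c → b = 2 ∨ c = 2) h2 hdouble
  have h : PrimrecPred fun a : ℕ => a ≠ 0 ∧ a ≠ 2 ∧ ∀ b < 2 * a, ∀ c < 2 * a,
      Good b → Good c → a = mulCode b c → b = 2 ∨ c = 2 :=
    (Primrec.eq.comp Primrec.id (const 0)).not.and <|
      (Primrec.eq.comp Primrec.id (const 2)).not.and h3
  exact ((h.comp primrec_val).of_eq fun a => (irreducible_iff_bounded a).symm).computablePred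

/-! ### Prime elements -/

/-- The monomial with exponent `m`. -/
def mono (m : ℕ) (hm : m ∈ expMonoid) : Dom := ⟨2 ^ m, good_two_pow hm⟩

lemma mono_mul_mono {m n : ℕ} (hm : m ∈ expMonoid) (hn : n ∈ expMonoid) :
    mono m hm * mono n hn = mono (m * n) (mul_mem hm hn) := by
  apply embed_injective
  ext i
  rw [map_mul, embed_apply, embed_apply, embed_apply, mono, mono, mono,
    toArith_two_pow_mul m hm.1, toArith_apply, toArith_apply]
  simp only [Nat.testBit_two_pow, decide_eq_true_iff]
  by_cases hd : m ∣ i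
  · obtain ⟨j, rfl⟩ := hd
    have hm0 := Nat.pos_of_ne_zero hm.1
    simp [Nat.mul_div_cancel_left _ hm0, hm.1]
  · rw [if_neg hd, if_neg]
    rintro ⟨-, rfl⟩
    exact hd (Dvd.intro _ rfl)

lemma testBit_mono_mul {m i : ℕ} (hm : m ∈ expMonoid) (c : Dom) :
    (mono m hm * c).1.testBit i = true ↔ m ∣ i ∧ c.1.testBit (i / m) = true := by
  rw [← toArith_ne_zero_iff (mono m hm * c).2, ← embed_apply, map_mul, embed_apply, embed_apply,
    mono, toArith_two_pow_mul m hm.1, ← toArith_ne_zero_iff c.2]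
  split_ifs with h <;> simp [h]

/-- If the program of `p` does not halt, divisibility by the monomial with exponent `p` is tested
on exponents, as in a polynomial ring. -/
lemma mono_dvd_iff {p : ℕ} (hp : p.Prime) (h2 : p ≠ 2) (hK : ∀ b, ¬ Halts p b) (a : Dom) :
    mono p (prime_mem hp h2) ∣ a ↔ ∀ i, a.1.testBit i = true → p ∣ i := by
  constructor
  · rintro ⟨c, rfl⟩ i hi
    exact ((testBit_mono_mul _ c).1 hi).1
  · intro h
    have hbit : ∀ i, (bitSum a.1 fun i => a.1.testBit (p * i) = true).testBit i = true ↔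
        a.1.testBit (p * i) = true := fun i => by
      rw [testBit_bitSum]
      refine ⟨And.right, fun h => ⟨?_, h⟩⟩
      exact (Nat.le_mul_of_pos_left i hp.pos).trans_lt (lt_of_testBit h)
    refine ⟨⟨_, fun i hi => mem_of_mul_mem hp h2 hK (a.2 _ ((hbit i).1 hi))⟩, Subtype.ext ?_⟩
    refine Nat.eq_of_testBit_eq fun i => ?_
    rw [Bool.eq_iff_iff, testBit_mono_mul, hbit]
    constructor
    · intro hi
      exact ⟨h i hi, by rwa [Nat.mul_div_cancel' (h i hi)]⟩
    · rintro ⟨hd, hi⟩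
      rwa [Nat.mul_div_cancel' hd] at hi

lemma prime_mono {p : ℕ} (hp : p.Prime) (h2 : p ≠ 2) (hK : ∀ b, ¬ Halts p b) :
    Prime (mono p (prime_mem hp h2)) := by
  refine ⟨fun h => ?_, fun h => ?_, fun a b h => ?_⟩
  · have := congrArg Subtype.val h
    rw [val_zero] at this
    exact absurd this (by simp [mono])
  · have h1 : 2 ^ p = 2 ^ 1 := isUnit_iff.1 h
    exact hp.one_lt.ne' (Nat.pow_right_injective le_rfl h1)
  · simp only [mono_dvd_iff hp h2 hK] at h ⊢
    by_contra! hc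
    obtain ⟨I, J, -, hI, -, -, hJ, -, hIJ⟩ := exists_top (fun i => ¬ p ∣ i)
      (fun x y => by rw [hp.dvd_mul, not_or]) a b hc.1 hc.2
    exact (hp.dvd_mul.1 (h _ hIJ)).elim hI hJ

lemma not_prime_mono {p b : ℕ} (hp : p.Prime) (h2 : p ≠ 2) (hb : Halts p b) :
    ¬ Prime (mono p (prime_mem hp h2)) := by
  intro hprime
  have hmem : ∀ k, p * 2 ^ (b + 1 + k) ∈ expMonoid := fun k =>
    ⟨mul_ne_zero hp.ne_zero (by positivity), Or.inr ⟨_, ⟨p, b, hp, h2, hb, rfl⟩,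
      mul_dvd_mul_left _ (pow_dvd_pow _ (Nat.le_add_right _ _))⟩⟩
  have hdvd : mono p (prime_mem hp h2) ∣ mono _ (hmem 0) * mono _ (hmem 0) := by
    refine ⟨mono _ (hmem (b + 1)), ?_⟩
    rw [mono_mul_mono, mono_mul_mono]
    congr 1
    ring
  obtain ⟨c, hc⟩ : mono p (prime_mem hp h2) ∣ mono _ (hmem 0) := (hprime.dvd_or_dvd hdvd).elim id id
  have hbit : (mono _ (hmem 0)).1.testBit (p * 2 ^ (b + 1 + 0)) = true := Nat.testBit_two_pow_self
  rw [hc, testBit_mono_mul, Nat.mul_div_cancel_left _ hp.pos] at hbit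
  exact two_pow_notMem b (c.2 _ hbit.2)

open Nat.Partrec in
lemma not_computablePred_prime : ¬ ComputablePred fun a : Dom => Prime a := by
  intro hcomp
  -- each program `k` is attached to an odd prime, which unbounded search finds computably from `k`
  have hex : ∀ k : Code, ∃ p : ℕ, p.Prime ∧ Nat.count Nat.Prime p = Encodable.encode k + 1 :=
    fun k => ⟨_, Nat.prime_nth_prime _, Nat.count_nth_of_infinite Nat.infinite_setOfPred_prime _⟩
  have hfind := Computable.find (α := Code)
    (P := fun k p => p.Prime ∧ Nat.count Nat.Prime p = Encodable.encode k + 1)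
    (((primrecPred_prime.comp snd).and (Primrec.eq.comp (primrec_count_prime.comp snd)
      (succ.comp (Primrec.encode.comp fst)))).computablePred) hex
  have hspec := fun k => Nat.find_spec (hex k)
  set p : Code → ℕ := fun k => Nat.find (hex k)
  have hp : ∀ k, (p k).Prime := fun k => (hspec k).1
  have hcount : ∀ k, Nat.count Nat.Prime (p k) = Encodable.encode k + 1 := fun k => (hspec k).2
  have h2 : ∀ k, p k ≠ 2 := fun k h => by
    have h0 : Nat.count Nat.Prime 2 = 0 := by decide
    have := hcount k
    rw [h, h0] at this
    omega
  have hmono : Computable fun k => mono (p k) (prime_mem (hp k) (h2 k)) :=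
    Computable.subtype_mk primrecPred_good
      (primrec_pow.to_comp.comp (Computable.const 2) hfind)
  have hdom : ∀ k : Code, (Code.eval k 0).Dom ↔ ∃ b, Halts (p k) b := fun k => by
    simp only [Halts, hcount, Nat.add_sub_cancel, Denumerable.ofNat_encode,
      Option.isSome_iff_exists, Part.dom_iff_mem, Code.evaln_complete, Option.mem_def]
    exact exists_comm
  have hiff : ∀ k : Code,
      ¬ Prime (mono (p k) (prime_mem (hp k) (h2 k))) ↔ (Code.eval k 0).Dom := fun k => by
    rw [hdom]
    constructor
    · intro h
      by_contra! hK
      exact h (prime_mono (hp k) (h2 k) hK)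
    · rintro ⟨b, hb⟩
      exact not_prime_mono (hp k) (h2 k) hb
  obtain ⟨f, hf, hfeq⟩ := ComputablePred.computable_iff.1 hcomp
  refine ComputablePred.halting_problem 0 (ComputablePred.of_eq (ComputablePred.not
    (ComputablePred.computable_iff.2 ⟨_, hf.comp hmono, rfl⟩)) fun k => ?_)
  rw [← hiff k]
  exact not_congr (iff_of_eq (congrFun hfeq _).symm)

end PrimeIrred

/-- There exists a computable integral domain `A` such that the set of irreducible
elements of `A` is computable but the set of prime elements of `A` is not computable. -/
theorem stmt_0 :
    ∃ (A : Type) (_ : Primcodable A) (_ : CommRing A),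
      IsDomain A ∧
      Computable₂ (fun a b : A => a + b) ∧
      Computable₂ (fun a b : A => a * b) ∧
      ComputablePred (fun a : A => Irreducible a) ∧
      ¬ ComputablePred (fun a : A => Prime a) := by
  refine ⟨PrimeIrred.Dom, inferInstance, inferInstance, inferInstance, ?_, ?_,
    PrimeIrred.computablePred_irreducible, PrimeIrred.not_computablePred_prime⟩
  · exact (Primrec.subtype_val_iff.1 ((PrimeIrred.primrec_addCode.comp
      (PrimeIrred.primrec_val.comp Primrec.fst) (PrimeIrred.primrec_val.comp Primrec.snd)).of_eq
      fun q => (PrimeIrred.val_add q.1 q.2).symm)).to_comp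
  · exact (Primrec.subtype_val_iff.1 ((PrimeIrred.primrec_mulCode.comp
      (PrimeIrred.primrec_val.comp Primrec.fst) (PrimeIrred.primrec_val.comp Primrec.snd)).of_eq
      fun q => (PrimeIrred.val_mul q.1 q.2).symm)).to_comp
end

section
/- There exists a computable integral domain A such that the set of prime elements of A is a computable predicate but the set of irreducible elements of A is not a computable predicate. Formally: there exist a type A, a Primcodable instance on A, and a commutative ring structure on A such that A is an integral domain, the functions (fun a b => a + b) and (fun a b => a * b) are computable (Computable₂), the predicate (fun a => Prime a) is a computable predicate (ComputablePred), and the predicate (fun a => Irreducible a) is not a computable predicate. -/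
/-!
The ring is the monoid algebra `𝔽₂[M]` of the additive monoid
`M = {0, 1} ∪ {slot a | program a halts} ∪ [2, ∞) ⊆ ℚ`, where `slot a = 3/2 + 1/(a + 3)`. It is
realised as a subring of the domain `𝔽₂[x ^ ℚ]`.

* `M` is computably enumerable and sums in `M` are computable on codes. An element of the ring is
  coded by a list of codes of exponents: addition is concatenation, multiplication is termwise, and
  equality is a parity check (`listVal_eq_iff`). Encoding every element by its least number makes
  the ring computable (`exists_primcodable_of_numbering`).
* Degrees are additive, so `x ^ m` is irreducible iff `m` is an atom of `M`. The exponent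
  `1 + slot a` is an atom iff `slot a ∉ M`, i.e. iff program `a` does not halt
  (`irreducible_mono_iff`). Deciding irreducibility would therefore decide the halting problem.
* There are no primes at all (`not_prime`), so primality is trivially decidable. This is because
  every `f` has a square root `g` in `𝔽₂[x ^ ℚ]`, and `g x²` lies in the ring since `M` contains
  `[2, ∞)`: then `f` divides the square of `g x²`, and a prime `f` would divide `g x²` itself,
  hence `x⁴`, hence both `x²` and `x^(5/2)`, which the gaps of `M` below `2` exclude.
-/

/-! ### Coding a numbered type -/

/-- A type numbered by `ℕ` with primitive recursive equality of values is `Primcodable` in such a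
way that the numbering is computable and has a computable section: each element is encoded by its
least number. -/
theorem exists_primcodable_of_numbering {A : Type} (ν : ℕ → A) (hν : Function.Surjective ν)
    (heq : PrimrecRel fun m n => ν m = ν n) :
    ∃ (_ : Primcodable A) (rep : A → ℕ), Computable ν ∧ Computable rep ∧ ∀ a, ν (rep a) = a := by
  classical
  let p : ℕ → Prop := fun n => ∀ m < n, ¬ ν m = ν n
  have hp : PrimrecPred p :=
    (PrimrecRel.forall_lt heq.not).comp Primrec.id Primrec.id
  have hex (a : A) : ∃ n, ν n = a := hν a
  let e : A ≃ Subtype p :=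
    { toFun := fun a => ⟨Nat.find (hex a), fun m hm h =>
        Nat.find_min (hex a) hm (h.trans (Nat.find_spec (hex a)))⟩
      invFun := fun n => ν n.1
      left_inv := fun a => Nat.find_spec (hex a)
      right_inv := fun n => by
        apply Subtype.ext
        refine (Nat.find_eq_iff _).2 ⟨rfl, fun m hm h => n.2 m hm h⟩ }
  let _ : Primcodable (Subtype p) := Primcodable.subtype hp
  let _ : Primcodable A := Primcodable.ofEquiv _ e
  have he : Computable e := (Primrec.of_equiv (e := e)).to_comp
  refine ⟨inferInstance, fun a => (e a).1, ?_, Primrec.subtype_val.to_comp.comp he,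
    fun a => e.left_inv a⟩
  have hes : Computable e.symm := (Primrec.of_equiv_symm (e := e)).to_comp
  have hfind : Computable fun n => Nat.find (hex (ν n)) := by
    have h1 : Computable₂ fun (n m : ℕ) => decide (ν m = ν n) :=
      (Primrec₂.swap (PrimrecRel.decide heq)).to_comp
    refine Partrec.of_eq_tot (f := fun n => Nat.rfind fun m => Part.some (decide (ν m = ν n)))
      (Partrec.rfind h1.partrec₂) fun n => ?_
    refine Nat.mem_rfind.2 ?_
    refine ⟨by simpa using (Nat.find_spec (hex (ν n))), fun {m} hm => ?_⟩
    simpa using Nat.find_min (hex (ν n)) hm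
  have h2 : Computable fun n => e (ν n) := by
    have : Primrec (fun x : Subtype p => x.1) := Primrec.subtype_val
    refine Computable.encode_iff.1 ?_
    exact (Computable.encode.comp hfind)
  exact (hes.comp h2).of_eq fun n => e.left_inv _

namespace HaltingExponents

open AddMonoidAlgebra

/-! ### The ambient ring `𝔽₂[x ^ ℚ]` -/

/-- Formal sums of monomials `x ^ q`, `q ∈ ℚ`, with coefficients in `𝔽₂`. -/
abbrev PuiseuxRing : Type := AddMonoidAlgebra (ZMod 2) ℚ

/-- The monomial `x ^ q`. -/
noncomputable def mono (q : ℚ) : PuiseuxRing := single q 1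

theorem mono_mul (p q : ℚ) : mono p * mono q = mono (p + q) := by
  simp [mono, single_mul_single]

theorem mono_ne_zero (q : ℚ) : mono q ≠ 0 := by
  simp [mono]

theorem mono_zero : mono 0 = 1 := rfl

theorem support_mono (q : ℚ) : (mono q).coeff.support = {q} := by
  simp [mono, Finsupp.support_single]

/-- The largest exponent of `f`, with the junk value `deg 0 = 0`. -/
noncomputable def deg (f : PuiseuxRing) : ℚ :=
  if h : f.coeff.support.Nonempty then f.coeff.support.max' h else 0

theorem support_nonempty {f : PuiseuxRing} (hf : f ≠ 0) : f.coeff.support.Nonempty := by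
  simpa [Finsupp.support_nonempty_iff] using hf

theorem deg_mem_support {f : PuiseuxRing} (hf : f ≠ 0) : deg f ∈ f.coeff.support := by
  rw [deg, dif_pos (support_nonempty hf)]
  exact Finset.max'_mem _ _

theorem le_deg {f : PuiseuxRing} {q : ℚ} (hq : q ∈ f.coeff.support) : q ≤ deg f := by
  rw [deg, dif_pos ⟨q, hq⟩]
  exact Finset.le_max' _ _ hq

theorem deg_mul {f g : PuiseuxRing} (hf : f ≠ 0) (hg : g ≠ 0) : deg (f * g) = deg f + deg g := by
  classical
  have hu : UniqueAdd f.coeff.support g.coeff.support (deg f) (deg g) := fun a b ha hb hab => by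
    have := le_deg ha
    have := le_deg hb
    constructor <;> linarith
  have hmem : deg f + deg g ∈ (f * g).coeff.support := by
    rw [Finsupp.mem_support_iff, coeff_mul_add_of_uniqueAdd hu]
    exact mul_ne_zero (Finsupp.mem_support_iff.1 (deg_mem_support hf))
      (Finsupp.mem_support_iff.1 (deg_mem_support hg))
  refine le_antisymm ?_ (le_deg hmem)
  obtain ⟨a, ha, b, hb, hab⟩ := Finset.mem_add.1
    (support_coeff_mul_subset f g (deg_mem_support (mul_ne_zero hf hg)))
  linarith [le_deg ha, le_deg hb]

theorem deg_mono (q : ℚ) : deg (mono q) = q := by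
  simpa [support_mono] using deg_mem_support (mono_ne_zero q)

/-- The ring map `x ^ q ↦ x ^ (q / 2)`; in characteristic two it is the square root, see
`halve_mul_self`. -/
noncomputable def halve : PuiseuxRing →+* PuiseuxRing :=
  mapDomainRingHom (ZMod 2) (AddMonoidHom.mulLeft (1 / 2 : ℚ))

theorem add_self (f : PuiseuxRing) : f + f = 0 := by
  ext q
  simpa using CharTwo.add_self_eq_zero (f.coeff q)

theorem halve_mul_self (f : PuiseuxRing) : halve f * halve f = f := by
  have h2 := add_self
  induction f using AddMonoidAlgebra.induction_linear with
  | zero => simp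
  | add f g hf hg =>
    rw [map_add]
    linear_combination hf + hg + h2 (halve f * halve g)
  | single a b =>
    have hb : b * b = b := by revert b; decide
    simp only [halve, mapDomainRingHom_apply, mapDomain_single, single_mul_single, hb]
    congr 1
    simp; ring

theorem support_halve {f : PuiseuxRing} {q : ℚ} (hq : q ∈ (halve f).coeff.support) :
    2 * q ∈ f.coeff.support := by
  classical
  have := Finsupp.mapDomain_support (f := fun x : ℚ => 1 / 2 * x) (s := f.coeff)
    (by simpa [halve] using hq)
  simp only [Finset.mem_image] at this
  obtain ⟨r, hr, rfl⟩ := this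
  simpa using hr

/-! ### The exponent monoid and its ring -/

/-- The program with index `a` halts on input `0` within `t` steps, in the sense of `evaln`. -/
def halts (t a : ℕ) : Bool :=
  (Nat.Partrec.Code.evaln t (Denumerable.ofNat Nat.Partrec.Code a) 0).isSome

theorem exists_halts_iff (a : ℕ) :
    (∃ t, halts t a = true) ↔ ((Denumerable.ofNat Nat.Partrec.Code a).eval 0).Dom := by
  simp only [halts, Option.isSome_iff_exists, Part.dom_iff_mem, Nat.Partrec.Code.evaln_complete]
  exact exists_comm

/-- The exponent in `(3/2, 2)` that is reserved for the program with index `a`. -/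
def slot (a : ℕ) : ℚ := 3 / 2 + 1 / (a + 3)

theorem lt_slot (a : ℕ) : 3 / 2 < slot a := by
  have : (0 : ℚ) < 1 / (a + 3) := by positivity
  unfold slot; linarith

theorem slot_lt (a : ℕ) : slot a < 2 := by
  have : 1 / (a + 3 : ℚ) ≤ 1 / 3 := by
    have : (0 : ℚ) ≤ a := a.cast_nonneg
    exact one_div_le_one_div_of_le (by norm_num) (by linarith)
  unfold slot; linarith

theorem slot_injective : Function.Injective slot := by
  intro a b h
  have ha : (a + 3 : ℚ) ≠ 0 := by positivity
  have hb : (b + 3 : ℚ) ≠ 0 := by positivity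
  unfold slot at h
  have h' : 1 / (a + 3 : ℚ) = 1 / (b + 3) := by linarith
  rw [one_div, one_div, inv_inj] at h'
  exact_mod_cast add_right_cancel h'

/-- Membership in the exponent monoid `{0, 1} ∪ {slot a | a halts} ∪ [2, ∞)`. -/
def IsExp (q : ℚ) : Prop :=
  q = 0 ∨ q = 1 ∨ (∃ a, (∃ t, halts t a = true) ∧ q = slot a) ∨ 2 ≤ q

theorem IsExp.eq_zero_or_eq_one_or {q : ℚ} (h : IsExp q) : q = 0 ∨ q = 1 ∨ 3 / 2 < q := by
  rcases h with h | h | ⟨a, -, rfl⟩ | h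
  · exact .inl h
  · exact .inr (.inl h)
  · exact .inr (.inr (lt_slot a))
  · exact .inr (.inr (by linarith))

/-- Sums of two nonzero exponents are at least `2`, so nothing has to be checked about slots. -/
theorem IsExp.add {p q : ℚ} (hp : IsExp p) (hq : IsExp q) : IsExp (p + q) := by
  rcases hp.eq_zero_or_eq_one_or with rfl | h1
  · simpa using hq
  rcases hq.eq_zero_or_eq_one_or with rfl | h2
  · simpa using hp
  refine .inr (.inr (.inr ?_))
  rcases h1 with h1 | h1 <;> rcases h2 with h2 | h2 <;> linarith

theorem isExp_slot_iff (a : ℕ) : IsExp (slot a) ↔ ∃ t, halts t a = true := by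
  have h1 := lt_slot a
  have h2 := slot_lt a
  constructor
  · rintro (h | h | ⟨b, hb, h⟩ | h)
    · linarith
    · linarith
    · rwa [slot_injective h]
    · linarith
  · exact fun h => .inr (.inr (.inl ⟨a, h, rfl⟩))

/-- The ring of all `f` whose exponents lie in the exponent monoid. -/
def expRing : Subring PuiseuxRing where
  carrier := {f | ∀ q ∈ f.coeff.support, IsExp q}
  mul_mem' {f g} hf hg q hq := by
    classical
    obtain ⟨a, ha, b, hb, rfl⟩ := Finset.mem_add.1 (support_coeff_mul_subset f g hq)
    exact (hf a ha).add (hg b hb)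
  add_mem' {f g} hf hg q hq := by
    classical
    rcases Finset.mem_union.1 (Finsupp.support_add (by simpa using hq)) with h | h
    exacts [hf q h, hg q h]
  one_mem' q hq := by
    rw [← mono_zero, support_mono, Finset.mem_singleton] at hq
    exact .inl hq
  zero_mem' q hq := by simp at hq
  neg_mem' {f} hf q hq := hf q (by simpa using hq)

theorem mem_expRing {f : PuiseuxRing} : f ∈ expRing ↔ ∀ q ∈ f.coeff.support, IsExp q := Iff.rfl

theorem mono_mem_expRing {q : ℚ} : mono q ∈ expRing ↔ IsExp q := by
  simp [mem_expRing, support_mono]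

theorem mono_mem_expRing_of_le {q : ℚ} (h : 2 ≤ q) : mono q ∈ expRing :=
  mono_mem_expRing.2 (.inr (.inr (.inr h)))

theorem isExp_deg {f : PuiseuxRing} (hf : f ∈ expRing) (h0 : f ≠ 0) : IsExp (deg f) :=
  hf _ (deg_mem_support h0)

theorem IsExp.nonneg {q : ℚ} (h : IsExp q) : 0 ≤ q := by
  rcases h.eq_zero_or_eq_one_or with h | h | h <;> linarith

theorem eq_one_of_deg_eq_zero {f : PuiseuxRing} (hf : f ∈ expRing) (h0 : f ≠ 0) (hd : deg f = 0) :
    f = 1 := by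
  have hne := Finsupp.mem_support_iff.1 (deg_mem_support h0)
  rw [hd] at hne
  rw [← mono_zero]
  ext q
  by_cases hq : q = 0
  · subst hq
    have : ∀ b : ZMod 2, b ≠ 0 → b = 1 := by decide
    simpa [mono] using this _ hne
  · have : f.coeff q = 0 := by
      by_contra h
      have hs := Finsupp.mem_support_iff.2 h
      exact hq (le_antisymm (hd ▸ le_deg hs) (hf q hs).nonneg)
    simp [mono, this, Ne.symm hq]

theorem halve_mul_mono_mem {f : PuiseuxRing} (hf : f ∈ expRing) : halve f * mono 2 ∈ expRing := by
  classical
  intro q hq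
  obtain ⟨a, ha, b, hb, rfl⟩ := Finset.mem_add.1 (support_coeff_mul_subset _ _ hq)
  rw [support_mono, Finset.mem_singleton] at hb
  have := (hf _ (support_halve ha)).nonneg
  exact .inr (.inr (.inr (by linarith)))

/-- Let `f` be prime and `g = √f`. From `(g x²)² = f x⁴` one gets `f ∣ g x²`, hence `g k = x²` with
`k` in the ring, and `f k² = x⁴`. By primality again, `f` divides both `x²` and `x^(5/2)`, whose
exponents differ by `1/2`; no positive degree of `f` is compatible with that. -/
theorem not_prime (f : expRing) : ¬ Prime f := by
  intro hp
  obtain ⟨f, hf⟩ := f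
  have hf0 : f ≠ 0 := fun h => hp.ne_zero (Subtype.ext h)
  have hsq := halve_mul_self f
  have hg0 : halve f ≠ 0 := fun h => hf0 (by rw [← hsq, h, mul_zero])
  -- Primality is used only for squares: `f ∣ y²` gives `f ∣ y`.
  have dvd_of_sq (y : expRing) (z : PuiseuxRing) (hz : z ∈ expRing)
      (h : (y : PuiseuxRing) * y = f * z) :
      ∃ k ∈ expRing, (y : PuiseuxRing) = f * k := by
    have : (⟨f, hf⟩ : expRing) ∣ y * y := ⟨⟨z, hz⟩, Subtype.ext h⟩
    obtain ⟨k, hk⟩ := (hp.dvd_or_dvd this).elim id id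
    exact ⟨k, k.2, congrArg Subtype.val hk⟩
  have m4 : mono 2 * mono 2 = mono 4 := by rw [mono_mul]; norm_num
  obtain ⟨k, hk, hfk⟩ := dvd_of_sq ⟨_, halve_mul_mono_mem hf⟩ (mono 4)
    (mono_mem_expRing_of_le (by norm_num)) (by linear_combination hsq * mono 4 + halve f * halve f * m4)
  -- Here `k` is the cofactor in `f k = g x²`; cancel one factor `g` of `f = g²`.
  have hgk : mono 2 = halve f * k := by
    apply mul_left_cancel₀ hg0
    linear_combination hfk - k * hsq
  obtain ⟨h, hh, hfh⟩ := dvd_of_sq ⟨mono 2, mono_mem_expRing_of_le le_rfl⟩ (k * k) (mul_mem hk hk)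
    (by linear_combination (mono 2 + halve f * k) * hgk + k * k * hsq)
  have m5 : mono (5 / 2) * mono (5 / 2) = mono 2 * mono 2 * mono 1 := by
    simp only [mono_mul]; norm_num
  obtain ⟨h', hh', hfh'⟩ := dvd_of_sq ⟨mono (5 / 2), mono_mem_expRing_of_le (by norm_num)⟩
    (k * k * mono 1) (mul_mem (mul_mem hk hk) (mono_mem_expRing.2 (.inr (.inl rfl))))
    (by linear_combination m5 + mono 1 * ((mono 2 + halve f * k) * hgk + k * k * hsq))
  simp only at hfh hfh'
  have hh0 : h ≠ 0 := by rintro rfl; exact mono_ne_zero 2 (by simpa using hfh)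
  have hh0' : h' ≠ 0 := by rintro rfl; exact mono_ne_zero _ (by simpa using hfh')
  have d1 : 2 = deg f + deg h := by rw [← deg_mul hf0 hh0, ← hfh, deg_mono]
  have d2 : 5 / 2 = deg f + deg h' := by rw [← deg_mul hf0 hh0', ← hfh', deg_mono]
  have hfd : deg f ≠ 0 := fun hd =>
    hp.not_isUnit (by
      have : (⟨f, hf⟩ : expRing) = 1 := Subtype.ext (eq_one_of_deg_eq_zero hf hf0 hd)
      rw [this]; exact isUnit_one)
  have e1 := (isExp_deg hf hf0).eq_zero_or_eq_one_or
  have e2 := (isExp_deg hh hh0).eq_zero_or_eq_one_or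
  have e3 := (isExp_deg hh' hh0').eq_zero_or_eq_one_or
  rcases e1 with e1 | e1 | e1
  · exact hfd e1
  · rcases e3 with e3 | e3 | e3 <;> linarith
  · rcases e2 with e2 | e2 | e2 <;> rcases e3 with e3 | e3 | e3 <;> linarith

theorem mono_not_isUnit {q : ℚ} (hq : mono q ∈ expRing) (h0 : 0 < q) :
    ¬ IsUnit (⟨mono q, hq⟩ : expRing) := by
  intro h
  obtain ⟨⟨b, hb⟩, hab⟩ := h.exists_right_inv
  have hab : mono q * b = 1 := congrArg Subtype.val hab
  have hb0 : b ≠ 0 := by rintro rfl; simp at hab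
  have := congrArg deg hab
  rw [deg_mul (mono_ne_zero q) hb0, deg_mono, ← mono_zero, deg_mono] at this
  linarith [(isExp_deg hb hb0).nonneg]

theorem one_add_slot_mem (a : ℕ) : mono (1 + slot a) ∈ expRing :=
  mono_mem_expRing_of_le (by linarith [lt_slot a])

/-- A nontrivial factorization of `x ^ (1 + slot a)` splits `1 + slot a < 3` into two nonzero
exponents. Not both exceed `3/2`, so one is `1` and the other is `slot a`. -/
theorem irreducible_mono_iff (a : ℕ) :
    Irreducible (⟨mono (1 + slot a), one_add_slot_mem a⟩ : expRing) ↔ ¬ ∃ t, halts t a = true := by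
  have h1 := lt_slot a
  have h2 := slot_lt a
  rw [← isExp_slot_iff]
  constructor
  · intro hirr hs
    have hfac : (⟨mono (1 + slot a), one_add_slot_mem a⟩ : expRing) =
        ⟨mono 1, mono_mem_expRing.2 (.inr (.inl rfl))⟩ * ⟨mono (slot a), mono_mem_expRing.2 hs⟩ :=
      Subtype.ext (mono_mul _ _).symm
    rcases hirr.isUnit_or_isUnit hfac with h | h
    · exact mono_not_isUnit _ one_pos h
    · exact mono_not_isUnit _ (by linarith) h
  · intro hs
    refine ⟨mono_not_isUnit _ (by linarith), ?_⟩
    rintro ⟨f, hf⟩ ⟨g, hg⟩ hfg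
    have hfg : mono (1 + slot a) = f * g := congrArg Subtype.val hfg
    have hf0 : f ≠ 0 := by rintro rfl; exact mono_ne_zero _ (by simpa using hfg)
    have hg0 : g ≠ 0 := by rintro rfl; exact mono_ne_zero _ (by simpa using hfg)
    have hd := congrArg deg hfg
    rw [deg_mono, deg_mul hf0 hg0] at hd
    have ef := isExp_deg hf hf0
    have eg := isExp_deg hg hg0
    rcases ef.eq_zero_or_eq_one_or with e1 | e1 | e1
    · left
      rw [show (⟨f, hf⟩ : expRing) = 1 from Subtype.ext (eq_one_of_deg_eq_zero hf hf0 e1)]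
      exact isUnit_one
    · exact absurd (by rwa [show slot a = deg g by linarith]) hs
    · rcases eg.eq_zero_or_eq_one_or with e2 | e2 | e2
      · right
        rw [show (⟨g, hg⟩ : expRing) = 1 from Subtype.ext (eq_one_of_deg_eq_zero hg hg0 e2)]
        exact isUnit_one
      · exact absurd (by rwa [show slot a = deg f by linarith]) hs
      · linarith

/-! ### Codes for exponents -/

/-- Codes for elements of the exponent monoid; the third component is a tag. The code `(a, b, 0)`
stands for `2 + a / (b + 1)`, a code `(a, b, 1)` for `0`, and `(a, b, w + 2)` for `slot a` if
program `a` halts within `b` steps and for `1` otherwise. -/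
abbrev ExpCode : Type := ℕ × ℕ × ℕ

/-- Numerator of the coded exponent. -/
def num : ExpCode → ℕ
  | (a, b, 0) => 2 * (b + 1) + a
  | (_, _, 1) => 0
  | (a, b, _ + 2) => if halts b a = true then 3 * a + 11 else 1

/-- Denominator of the coded exponent. -/
def den : ExpCode → ℕ
  | (_, b, 0) => b + 1
  | (_, _, 1) => 1
  | (a, b, _ + 2) => if halts b a = true then 2 * a + 6 else 1

/-- The coded exponent. -/
def val (c : ExpCode) : ℚ := num c / den c

/-- Addition of codes. Two codes with tag other than `1` stand for exponents at least `1`, so their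
sum has the form `2 + a / (b + 1)` and the truncated subtractions are exact. -/
def addCode (c d : ExpCode) : ExpCode :=
  if c.2.2 = 1 then d else if d.2.2 = 1 then c else
    (num c * den d + num d * den c - 2 * (den c * den d), den c * den d - 1, 0)

theorem den_pos (c : ExpCode) : 0 < den c := by
  rcases c with ⟨a, b, _ | _ | w⟩
  · simp [den]
  · simp [den]
  · simp only [den]; split_ifs <;> omega

theorem den_le_num {c : ExpCode} (hc : c.2.2 ≠ 1) : den c ≤ num c := by
  rcases c with ⟨a, b, _ | _ | w⟩
  · simp only [den, num]; omega
  · simp at hc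
  · simp only [den, num]; split_ifs <;> omega

theorem val_eq_zero {c : ExpCode} (hc : c.2.2 = 1) : val c = 0 := by
  rcases c with ⟨a, b, w⟩
  obtain rfl : w = 1 := hc
  simp [val, num]

theorem val_offset (a b : ℕ) : val (a, b, 0) = 2 + a / (b + 1) := by
  simp only [val, num, den]
  push_cast
  field_simp

theorem val_slot {a b : ℕ} (w : ℕ) (h : halts b a = true) : val (a, b, w + 2) = slot a := by
  simp only [val, num, den, h, if_true, slot]
  push_cast
  field_simp
  ring

theorem val_one {a b : ℕ} (w : ℕ) (h : ¬ halts b a = true) : val (a, b, w + 2) = 1 := by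
  simp [val, num, den, h]

theorem isExp_val (c : ExpCode) : IsExp (val c) := by
  rcases c with ⟨a, b, _ | _ | w⟩
  · rw [val_offset]
    have : (0 : ℚ) ≤ a / (b + 1) := by positivity
    exact .inr (.inr (.inr (by linarith)))
  · exact .inl (val_eq_zero rfl)
  · by_cases h : halts b a = true
    · rw [val_slot w h]
      exact (isExp_slot_iff a).2 ⟨b, h⟩
    · exact .inr (.inl (val_one w h))

theorem exists_val_eq {q : ℚ} (hq : IsExp q) : ∃ c, val c = q := by
  rcases hq with rfl | rfl | ⟨a, ⟨t, ht⟩, rfl⟩ | h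
  · exact ⟨(0, 0, 1), val_eq_zero rfl⟩
  · refine ⟨(0, 0, 2), val_one 0 ?_⟩
    -- `evaln` with step bound `0` never returns a value.
    simp [halts, Nat.Partrec.Code.evaln]
  · exact ⟨(a, t, 2), val_slot 0 ht⟩
  · refine ⟨((q - 2).num.toNat, (q - 2).den - 1, 0), ?_⟩
    rw [val_offset]
    have h1 : (((q - 2).num.toNat : ℕ) : ℚ) = ((q - 2).num : ℚ) := by
      have : (((q - 2).num.toNat : ℕ) : ℤ) = (q - 2).num :=
        Int.toNat_of_nonneg (Rat.num_nonneg.2 (by linarith))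
      exact_mod_cast this
    have h2 : (((q - 2).den - 1 : ℕ) : ℚ) + 1 = (q - 2).den := by
      have := (q - 2).den_pos
      exact_mod_cast Nat.sub_add_cancel this
    rw [h1, h2, Rat.num_div_den]
    ring

theorem val_addCode (c d : ExpCode) : val (addCode c d) = val c + val d := by
  unfold addCode
  split_ifs with hc hd
  · rw [val_eq_zero hc, zero_add]
  · rw [val_eq_zero hd, add_zero]
  · have h1 := den_le_num hc
    have h2 := den_le_num hd
    have p1 := den_pos c
    have p2 := den_pos d
    have hle : 2 * (den c * den d) ≤ num c * den d + num d * den c := by nlinarith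
    have hpos : 1 ≤ den c * den d := Nat.mul_pos p1 p2
    rw [val_offset, Nat.cast_sub hle, Nat.cast_sub hpos]
    have q1 : (den c : ℚ) ≠ 0 := by positivity
    have q2 : (den d : ℚ) ≠ 0 := by positivity
    simp only [val]
    push_cast
    field_simp
    ring

theorem val_eq_iff (c d : ExpCode) : val c = val d ↔ num c * den d = num d * den c := by
  have q1 : (den c : ℚ) ≠ 0 := by have := den_pos c; positivity
  have q2 : (den d : ℚ) ≠ 0 := by have := den_pos d; positivity
  rw [val, val, div_eq_div_iff q1 q2]
  exact_mod_cast Iff.rfl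

theorem primrec_halts : Primrec₂ halts :=
  Primrec.option_isSome.comp (Nat.Partrec.Code.primrec_evaln.comp
    (((Primrec.fst).pair ((Primrec.ofNat _).comp Primrec.snd)).pair (Primrec.const 0)))

/-- Definition by cases on the tag of a code, in the form used by `num` and `den`. -/
theorem primrec_byTag {f g h : ExpCode → ℕ} (hf : Primrec f) (hg : Primrec g) (hh : Primrec h) :
    Primrec fun c : ExpCode => if c.2.2 = 0 then f c else if c.2.2 = 1 then g c
      else if halts c.2.1 c.1 = true then h c else 1 :=
  have htag : Primrec fun c : ExpCode => c.2.2 := Primrec.snd.comp Primrec.snd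
  Primrec.ite (Primrec.eq.comp htag (Primrec.const 0)) hf
    (Primrec.ite (Primrec.eq.comp htag (Primrec.const 1)) hg
      (Primrec.ite (Primrec.eq.comp
        (primrec_halts.comp (Primrec.fst.comp Primrec.snd) Primrec.fst) (Primrec.const true))
        hh (Primrec.const 1)))

theorem primrec_num : Primrec num := by
  have ha : Primrec fun c : ExpCode => c.1 := Primrec.fst
  have hb : Primrec fun c : ExpCode => c.2.1 := Primrec.fst.comp Primrec.snd
  refine (primrec_byTag (f := fun c => 2 * (c.2.1 + 1) + c.1) (g := fun _ => 0)
    (h := fun c => 3 * c.1 + 11)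
    (Primrec.nat_add.comp (Primrec.nat_mul.comp (Primrec.const 2) (Primrec.succ.comp hb)) ha)
    (Primrec.const 0)
    (Primrec.nat_add.comp (Primrec.nat_mul.comp (Primrec.const 3) ha) (Primrec.const 11))).of_eq ?_
  rintro ⟨a, b, _ | _ | w⟩ <;> simp [num]

theorem primrec_den : Primrec den := by
  have ha : Primrec fun c : ExpCode => c.1 := Primrec.fst
  have hb : Primrec fun c : ExpCode => c.2.1 := Primrec.fst.comp Primrec.snd
  refine (primrec_byTag (f := fun c => c.2.1 + 1) (g := fun _ => 1) (h := fun c => 2 * c.1 + 6)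
    (Primrec.succ.comp hb) (Primrec.const 1)
    (Primrec.nat_add.comp (Primrec.nat_mul.comp (Primrec.const 2) ha) (Primrec.const 6))).of_eq ?_
  rintro ⟨a, b, _ | _ | w⟩ <;> simp [den]

theorem primrec_addCode : Primrec₂ addCode := by
  have htag : Primrec fun c : ExpCode => c.2.2 := Primrec.snd.comp Primrec.snd
  have nc : Primrec fun p : ExpCode × ExpCode => num p.1 := primrec_num.comp Primrec.fst
  have nd : Primrec fun p : ExpCode × ExpCode => num p.2 := primrec_num.comp Primrec.snd
  have dc : Primrec fun p : ExpCode × ExpCode => den p.1 := primrec_den.comp Primrec.fst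
  have dd : Primrec fun p : ExpCode × ExpCode => den p.2 := primrec_den.comp Primrec.snd
  have hden := Primrec.nat_mul.comp dc dd
  exact Primrec.ite (Primrec.eq.comp (htag.comp Primrec.fst) (Primrec.const 1)) Primrec.snd
    (Primrec.ite (Primrec.eq.comp (htag.comp Primrec.snd) (Primrec.const 1)) Primrec.fst
      ((Primrec.nat_sub.comp (Primrec.nat_add.comp (Primrec.nat_mul.comp nc dd)
          (Primrec.nat_mul.comp nd dc)) (Primrec.nat_mul.comp (Primrec.const 2) hden)).pair
        ((Primrec.nat_sub.comp hden (Primrec.const 1)).pair (Primrec.const 0))))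

theorem primrec_val_eq : PrimrecRel fun c d : ExpCode => val c = val d := by
  have h : PrimrecRel fun c d : ExpCode => num c * den d = num d * den c :=
    Primrec.eq.comp
      (Primrec.nat_mul.comp (primrec_num.comp Primrec.fst) (primrec_den.comp Primrec.snd))
      (Primrec.nat_mul.comp (primrec_num.comp Primrec.snd) (primrec_den.comp Primrec.fst))
  exact h.of_eq fun c d => (val_eq_iff c d).symm

/-! ### Codes for ring elements -/

/-- The ring element coded by a list `[c₁, …, cₙ]`, namely `x ^ val c₁ + ⋯ + x ^ val cₙ`. -/
noncomputable def listVal (l : List ExpCode) : expRing :=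
  (l.map fun c => (⟨mono (val c), mono_mem_expRing.2 (isExp_val c)⟩ : expRing)).sum

theorem listVal_append (l m : List ExpCode) : listVal (l ++ m) = listVal l + listVal m := by
  simp [listVal]

theorem listVal_cons (c : ExpCode) (l : List ExpCode) :
    listVal (c :: l) = ⟨mono (val c), mono_mem_expRing.2 (isExp_val c)⟩ + listVal l := by
  simp [listVal]

/-- Multiplication on codes; addition is concatenation of lists. -/
def mulList (l m : List ExpCode) : List ExpCode := l.flatMap fun c => m.map fun d => addCode c d

theorem listVal_map_addCode (c : ExpCode) (m : List ExpCode) :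
    listVal (m.map fun d => addCode c d) =
      ⟨mono (val c), mono_mem_expRing.2 (isExp_val c)⟩ * listVal m := by
  induction m with
  | nil => simp [listVal]
  | cons d m ih =>
    rw [List.map_cons, listVal_cons, listVal_cons, ih, mul_add]
    congr 1
    exact Subtype.ext (by simp [val_addCode, mono_mul])

theorem listVal_mulList (l m : List ExpCode) : listVal (mulList l m) = listVal l * listVal m := by
  induction l with
  | nil => simp [listVal, mulList]
  | cons c l ih =>
    rw [mulList, List.flatMap_cons, listVal_append, listVal_map_addCode, listVal_cons, add_mul,
      ← ih, mulList]

theorem exists_listVal_eq (f : PuiseuxRing) (hf : f ∈ expRing) :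
    ∃ l, (listVal l : PuiseuxRing) = f := by
  have h1 (s : Finset ℚ) (hs : ∀ q ∈ s, IsExp q) :
      ∃ l, (listVal l : PuiseuxRing) = ∑ q ∈ s, mono q := by
    classical
    induction s using Finset.induction_on with
    | empty => exact ⟨[], rfl⟩
    | insert q s hq ih =>
      obtain ⟨l, hl⟩ := ih fun r hr => hs r (Finset.mem_insert_of_mem hr)
      obtain ⟨c, hc⟩ := exists_val_eq (hs q (Finset.mem_insert_self q s))
      exact ⟨c :: l, by rw [listVal_cons, Finset.sum_insert hq]; simp [hl, hc]⟩
  obtain ⟨l, hl⟩ := h1 f.coeff.support hf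
  refine ⟨l, hl.trans ?_⟩
  have hb : ∀ b : ZMod 2, b ≠ 0 → b = 1 := by decide
  conv_rhs => rw [← sum_coeff_single f]
  refine Finset.sum_congr rfl fun q hq => ?_
  rw [mono, hb _ (Finsupp.mem_support_iff.1 hq)]

open Classical in
theorem coeff_listVal (l : List ExpCode) (q : ℚ) :
    (listVal l : PuiseuxRing).coeff q = ((l.filter fun c => val c = q).length : ZMod 2) := by
  induction l with
  | nil => simp [listVal]
  | cons c l ih =>
    rw [listVal_cons]
    by_cases h : val c = q
    · simp [h, ih, mono, add_comm]
    · simp [h, ih, mono]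

open Classical in
/-- Two lists code the same element iff every exponent occurs an even number of times in their
concatenation. -/
theorem listVal_eq_iff (l m : List ExpCode) :
    listVal l = listVal m ↔
      ∀ c ∈ l ++ m, ((l ++ m).filter fun d => val d = val c).length % 2 = 0 := by
  have key : listVal l = listVal m ↔ (listVal (l ++ m) : PuiseuxRing) = 0 := by
    have h := add_self (listVal m)
    rw [listVal_append, Subring.coe_add]
    constructor
    · rintro h'
      rw [h', h]
    · intro h'
      exact Subtype.ext (add_right_cancel (h'.trans h.symm))
  have hz (n : ℕ) : (n : ZMod 2) = 0 ↔ n % 2 = 0 := by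
    rw [ZMod.natCast_eq_zero_iff, Nat.dvd_iff_mod_eq_zero]
  rw [key]
  constructor
  · intro h c _
    rw [← hz, ← coeff_listVal, h]
    simp
  · intro h
    ext q
    rw [coeff_listVal]
    by_cases hq : ∃ c ∈ l ++ m, val c = q
    · obtain ⟨c, hc, rfl⟩ := hq
      simpa using (hz _).2 (h c hc)
    · have : ((l ++ m).filter fun c => val c = q) = [] := by
        rw [List.filter_eq_nil_iff]
        intro c hc hcq
        exact hq ⟨c, hc, by simpa using hcq⟩
      rw [this]
      simp

theorem primrec_listVal_eq : PrimrecRel fun l m : List ExpCode => listVal l = listVal m := by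
  classical
  have h1 : PrimrecRel fun (c : ExpCode) (l : List ExpCode) =>
      (l.filter fun d => val d = val c).length % 2 = 0 :=
    Primrec.eq.comp (Primrec.nat_mod.comp
      (Primrec.list_length.comp (primrec_val_eq.listFilter.comp Primrec.snd Primrec.fst))
      (Primrec.const 2)) (Primrec.const 0)
  have h2 : PrimrecPred fun l : List ExpCode =>
      ∀ c ∈ l, (l.filter fun d => val d = val c).length % 2 = 0 :=
    h1.forall_mem_list.comp Primrec.id Primrec.id
  have h3 : PrimrecRel fun l m : List ExpCode =>
      ∀ c ∈ l ++ m, ((l ++ m).filter fun d => val d = val c).length % 2 = 0 :=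
    h2.comp Primrec.list_append
  exact h3.of_eq fun l m => (listVal_eq_iff l m).symm

theorem primrec_mulList : Primrec₂ mulList :=
  Primrec.list_flatMap Primrec.fst
    (Primrec.list_map (Primrec.snd.comp Primrec.fst)
      (primrec_addCode.comp (Primrec.snd.comp Primrec.fst) Primrec.snd))

theorem listVal_slot (a : ℕ) :
    listVal [(a + 5, 2 * a + 5, 0)] = ⟨mono (1 + slot a), one_add_slot_mem a⟩ := by
  have : val (a + 5, 2 * a + 5, 0) = 1 + slot a := by
    rw [val_offset, slot]
    push_cast
    field_simp
    ring
  exact Subtype.ext (by simp [listVal, this])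

end HaltingExponents

open HaltingExponents

/-- There exists a computable integral domain `A` such that the set of prime
elements of `A` is computable but the set of irreducible elements of `A` is not
computable. -/
theorem stmt_1 :
    ∃ (A : Type) (_ : Primcodable A) (_ : CommRing A),
      IsDomain A ∧
      Computable₂ (fun a b : A => a + b) ∧
      Computable₂ (fun a b : A => a * b) ∧
      ComputablePred (fun a : A => Prime a) ∧
      ¬ ComputablePred (fun a : A => Irreducible a) := by
  classical
  let dec : ℕ → List ExpCode := Denumerable.ofNat (List ExpCode)
  have hdec : Computable dec := Computable.ofNat _
  have hdec' (l : List ExpCode) : dec (Encodable.encode l) = l := Denumerable.ofNat_encode l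
  obtain ⟨inst, rep, hν, hrep, hνrep⟩ := exists_primcodable_of_numbering
    (fun n => listVal (dec n))
    (fun f => by
      obtain ⟨l, hl⟩ := exists_listVal_eq f f.2
      exact ⟨Encodable.encode l, by simp only [hdec']; exact Subtype.ext hl⟩)
    (primrec_listVal_eq.comp ((Primrec.ofNat _).comp Primrec.fst)
      ((Primrec.ofNat _).comp Primrec.snd))
  have hlist : Computable listVal :=
    (hν.comp Computable.encode).of_eq fun l => by rw [hdec']
  have hl : Computable fun p : expRing × expRing => dec (rep p.1) :=
    hdec.comp (hrep.comp Computable.fst)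
  have hr : Computable fun p : expRing × expRing => dec (rep p.2) :=
    hdec.comp (hrep.comp Computable.snd)
  refine ⟨expRing, inst, inferInstance, inferInstance, ?_, ?_, ?_, ?_⟩
  · refine (hlist.comp (Primrec.list_append.to_comp.comp hl hr)).of_eq fun p => ?_
    rw [listVal_append, hνrep, hνrep]
  · refine (hlist.comp (primrec_mulList.to_comp.comp hl hr)).of_eq fun p => ?_
    rw [listVal_mulList, hνrep, hνrep]
  · exact ⟨fun a => isFalse (not_prime a),
      (Computable.const false).of_eq fun a => by simp [not_prime a]⟩
  · intro hirr
    refine ComputablePred.halting_problem 0 ?_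
    have hcode : Computable fun c : Nat.Partrec.Code =>
        listVal [(Encodable.encode c + 5, 2 * Encodable.encode c + 5, 0)] := by
      refine hlist.comp (Primrec.to_comp ?_)
      exact Primrec.list_cons.comp
        ((Primrec.nat_add.comp Primrec.encode (Primrec.const 5)).pair
          ((Primrec.nat_add.comp (Primrec.nat_mul.comp (Primrec.const 2) Primrec.encode)
            (Primrec.const 5)).pair (Primrec.const 0))) (Primrec.const [])
    obtain ⟨_, hnot⟩ := hirr.not
    refine ComputablePred.of_eq (Computable.computablePred (hnot.comp hcode)) fun c => ?_
    change ¬ Irreducible (listVal _) ↔ _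
    rw [listVal_slot, irreducible_mono_iff, not_not, exists_halts_iff, Denumerable.ofNat_encode]
end

section
/- Let A be a strongly computable finite factorization domain, with witnessing computable divisor function D : A → List A. Then: (1) the set {u : A | IsUnit u} of units of A is finite, and the predicate (fun a => IsUnit a) is a computable predicate (ComputablePred); (2) the predicate (fun a => Irreducible a) is a computable predicate (ComputablePred). -/
/-!
The units of `A` are the divisors of `1`, so they are the members of one fixed finite list
`U = D 1`, and membership in a fixed list is primitive recursive.

For nonzero `a`, the trivial divisors of `a` are the units and the unit multiples of `a`, i.e. the
members of `U ++ U.map (· * a)`. Hence `a` is irreducible iff `a ≠ 0`, `a ∉ U` and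
every member of `D a` lies in that list (`irreducible_iff_of_divisors`). As `U` does not depend
on `a`, the list is computable from `a` by finitely many multiplications
(`computable_map_fixed_list`), and inclusion of lists is a primitive recursive relation
(`primrecRel_list_subset`).
-/

/-- For a list fixed in advance, only computability of each single `f u` is needed. -/
theorem computable_map_fixed_list {α β γ : Type} [Primcodable α] [Primcodable γ]
    (f : β → α → γ) (hf : ∀ u, Computable (f u)) (U : List β) :
    Computable (fun a => U.map (fun u => f u a)) := by
  induction U with
  | nil => exact Computable.const []
  | cons u U ih => exact Computable.list_cons.comp (hf u) ih

theorem primrecRel_mem {α : Type} [Primcodable α] :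
    PrimrecRel (fun (d : α) (M : List α) => d ∈ M) := by
  have h : PrimrecRel (fun (M : List α) (d : α) => ∃ x ∈ M, x = d) :=
    PrimrecRel.exists_mem_list Primrec.eq
  exact (h.comp Primrec.snd Primrec.fst).of_eq (by simp)

theorem primrecRel_list_subset {α : Type} [Primcodable α] :
    PrimrecRel (fun (L M : List α) => ∀ d ∈ L, d ∈ M) :=
  PrimrecRel.forall_mem_list primrecRel_mem

theorem PrimrecPred.comp_computable {α β : Type} [Primcodable α] [Primcodable β]
    {p : β → Prop} (hp : PrimrecPred p) {f : α → β} (hf : Computable f) :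
    ComputablePred (fun a => p (f a)) := by
  obtain ⟨_, hp⟩ := hp
  exact ⟨fun a => inferInstance, hp.to_comp.comp hf⟩

/-- Irreducible elements of a domain are the nonzero nonunits all of whose divisors are units or
unit multiples of the element; `U` lists the units and, if `a ≠ 0`, `L` lists the divisors of `a`. -/
theorem irreducible_iff_of_divisors {A : Type} [CommRing A] [IsDomain A] {U L : List A} {a : A}
    (hU : ∀ u, u ∈ U ↔ IsUnit u) (hL : a ≠ 0 → ∀ d, d ∈ L ↔ d ∣ a) :
    Irreducible a ↔ (a ≠ 0 ∧ a ∉ U) ∧ ∀ d ∈ L, d ∈ U ++ U.map (fun u => u * a) := by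
  constructor
  · intro h
    refine ⟨⟨h.ne_zero, fun ha => h.not_isUnit ((hU a).1 ha)⟩, fun d hd => ?_⟩
    obtain ⟨c, hc⟩ := (hL h.ne_zero d).1 hd
    rw [List.mem_append, List.mem_map]
    rcases h.isUnit_or_isUnit hc with hu | hu
    · exact Or.inl ((hU d).2 hu)
    · obtain ⟨v, rfl⟩ := hu
      refine Or.inr ⟨(v⁻¹ : Aˣ), (hU _).2 (Units.isUnit _), ?_⟩
      rw [hc, mul_comm d, Units.inv_mul_cancel_left]
  · rintro ⟨⟨h0, hn⟩, h⟩
    refine ⟨fun hu => hn ((hU a).2 hu), fun b c hbc => ?_⟩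
    have hb := h b ((hL h0 b).2 ⟨c, hbc⟩)
    rw [List.mem_append, List.mem_map] at hb
    rcases hb with hb | ⟨u, -, hu⟩
    · exact Or.inl ((hU b).1 hb)
    -- Here `b = u * a`, so `a = u * a * c` and cancelling `a` makes `c` a unit.
    · refine Or.inr (IsUnit.of_mul_eq_one u (mul_left_cancel₀ h0 ?_))
      calc a * (c * u) = u * a * c := by ring
        _ = a * 1 := by rw [hu, mul_one, ← hbc]

/-- If `A` is a strongly computable finite factorization domain with witnessing
computable divisor function `D`, then the set of units of `A` is finite, the predicate
`IsUnit` is computable, and the predicate `Irreducible` is computable. -/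
theorem stmt_5 {A : Type} [Primcodable A] [CommRing A] [IsDomain A]
    (hadd : Computable₂ (fun a b : A => a + b))
    (hmul : Computable₂ (fun a b : A => a * b))
    (D : A → List A) (hD : Computable D)
    (hDiv : ∀ a : A, a ≠ 0 → ∀ d : A, d ∈ D a ↔ d ∣ a) :
    {u : A | IsUnit u}.Finite ∧
    ComputablePred (fun a : A => IsUnit a) ∧
    ComputablePred (fun a : A => Irreducible a) := by
  have hU : ∀ u, u ∈ D 1 ↔ IsUnit u := fun u => by
    rw [hDiv 1 one_ne_zero, isUnit_iff_dvd_one]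
  have hmem : PrimrecPred (fun a : A => a ∈ D 1) :=
    primrecRel_mem.comp Primrec.id (Primrec.const (D 1))
  refine ⟨(D 1).finite_toSet.subset fun u hu => (hU u).2 hu, ?_, ?_⟩
  · exact (hmem.comp_computable Computable.id).of_eq hU
  · have hzero : PrimrecPred (fun a : A => a ≠ 0) :=
      (Primrec.eq.comp Primrec.id (Primrec.const 0)).not
    have hp : PrimrecPred (fun x : A × List A × List A =>
        (x.1 ≠ 0 ∧ x.1 ∉ D 1) ∧ ∀ d ∈ x.2.1, d ∈ x.2.2) :=
      ((hzero.and hmem.not).comp Primrec.fst).and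
        (primrecRel_list_subset.comp (Primrec.fst.comp Primrec.snd)
          (Primrec.snd.comp Primrec.snd))
    have hmap : Computable (fun a : A => (D 1).map (fun u => u * a)) :=
      computable_map_fixed_list (fun u a => u * a)
        (fun u => hmul.comp (Computable.const u) Computable.id) (D 1)
    have hf : Computable (fun a : A => (a, D a, D 1 ++ (D 1).map (fun u => u * a))) :=
      Computable.id.pair (hD.pair (Computable.list_append.comp (Computable.const (D 1)) hmap))
    exact (hp.comp_computable hf).of_eq fun a => (irreducible_iff_of_divisors hU (hDiv a)).symm
end

section
/- Let A be a computable integral domain such that A is a unique factorization domain (UniqueFactorizationMonoid), the set {u : A | IsUnit u} of units of A is finite, and the predicate (fun a => Irreducible a) is a computable predicate (ComputablePred). Then there exists a computable function D : A → List A such that for every nonzero a ∈ A, the members of the list D a are exactly the divisors of a in A; that is, A can be equipped so as to become a strongly computable finite factorization domain. -/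
/-!
Call an element *admissible* if it is irreducible, a unit, or zero. There are only finitely many
units, so admissibility is decidable by a computable function, and in a factorial ring every element
is a product of a finite list of admissible elements. Given `a`, an unbounded search over all lists
therefore finds such a factorization of `a`.

From a factorization the divisors are read off one factor at a time: if `p` is prime or a unit,
the divisors of `p * m` are the divisors of `m` together with the elements `p * d` for
`d ∣ m` (`dvd_mul_iff_of_prime_or_isUnit`). Starting from the list of units, i.e. the divisors of
`1`, a fold over the factorization yields all divisors of the product (`divFold_correct`).
Allowing zero as a factor makes the search terminate at `a = 0` as well, so the resulting function
is total.

Mathlib has folds and maps of lists only for primitive recursive functions; the versions for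
computable functions are `computable_list_foldl` and `computable_list_map`.
-/

/-! ### Folds and maps of lists along computable functions -/

/-- A left fold as a recursion on a position in the list: this is the form to which
`Computable.nat_rec` applies. -/
theorem foldl_take_eq_rec {β σ : Type} (f : σ → β → σ) (s : σ) (l : List β) (n : ℕ) :
    (l.take n).foldl f s =
      Nat.rec (motive := fun _ => σ) s
        (fun i acc => Option.casesOn (l[i]?) acc (fun b => f acc b)) n := by
  induction n with
  | zero => simp
  | succ n ih =>
    rw [List.take_add_one, List.foldl_append, ih]
    cases h : l[n]? <;> simp [h]

section Computability

variable {α β σ : Type} [Primcodable α] [Primcodable β] [Primcodable σ]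

theorem computable_list_foldl {f : α → List β} {g : α → σ} {h : α → σ → β → σ}
    (hf : Computable f) (hg : Computable g)
    (hh : Computable fun x : α × σ × β => h x.1 x.2.1 x.2.2) :
    Computable fun a => (f a).foldl (h a) (g a) := by
  have key : Computable fun a => Nat.rec (motive := fun _ => σ) (g a)
      (fun i acc => Option.casesOn ((f a)[i]?) acc (fun b => h a acc b)) (f a).length := by
    refine Computable.nat_rec
      (h := fun a q => Option.casesOn ((f a)[q.1]?) q.2 (fun b => h a q.2 b))
      (Computable.list_length.comp hf) hg ?_
    have hq : Computable fun x : α × ℕ × σ => x.2 := Computable.snd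
    refine Computable.option_casesOn (o := fun x : α × ℕ × σ => (f x.1)[x.2.1]?)
      (f := fun x => x.2.2) (g := fun x b => h x.1 x.2.2 b) ?_ (Computable.snd.comp hq) ?_
    · exact Computable.list_getElem?.comp (hf.comp Computable.fst) (Computable.fst.comp hq)
    · exact hh.comp ((Computable.fst.comp Computable.fst).pair
        ((Computable.snd.comp (hq.comp Computable.fst)).pair Computable.snd))
  refine key.of_eq fun a => ?_
  rw [← foldl_take_eq_rec, List.take_length]

theorem computable_list_map {f : α → List β} {g : α → β → σ}
    (hf : Computable f) (hg : Computable₂ g) :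
    Computable fun a => (f a).map (g a) := by
  have key : Computable fun a => (f a).foldl (fun acc b => acc ++ [g a b]) ([] : List σ) := by
    refine computable_list_foldl (h := fun a acc b => acc ++ [g a b]) hf (Computable.const _) ?_
    exact Computable.list_concat.comp (Computable.fst.comp Computable.snd)
      (hg.comp Computable.fst (Computable.snd.comp Computable.snd))
  refine key.of_eq fun a => ?_
  have aux : ∀ (l : List β) (s : List σ),
      l.foldl (fun acc b => acc ++ [g a b]) s = s ++ l.map (g a) := by
    intro l
    induction l with
    | nil => simp
    | cons b l ih => intro s; simp [ih]
  simpa using aux (f a) []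

theorem computable_decide_mem [DecidableEq α] (l : List α) :
    Computable fun a => decide (a ∈ l) := by
  induction l with
  | nil => simpa using Computable.const (α := α) false
  | cons c l ih =>
    have hc : Computable fun a : α => decide (a = c) :=
      (Primrec.eq.decide.comp Primrec.id (Primrec.const c)).to_comp
    refine (Computable.cond hc (Computable.const true) ih).of_eq fun a => ?_
    by_cases h : a = c <;> simp [h]

end Computability

/-! ### Divisors from a factorization -/

theorem dvd_mul_iff_of_prime_or_isUnit {A : Type} [CommRing A] [IsDomain A] {p m : A}
    (hp : Prime p ∨ IsUnit p) (d : A) :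
    d ∣ p * m ↔ d ∣ m ∨ ∃ e, e ∣ m ∧ p * e = d := by
  constructor
  · rintro ⟨c, hc⟩
    rcases hp with hp | hp
    · rcases hp.dvd_or_dvd ⟨m, hc.symm⟩ with ⟨e, rfl⟩ | ⟨e, rfl⟩
      · refine Or.inr ⟨e, ⟨c, mul_left_cancel₀ hp.ne_zero ?_⟩, rfl⟩
        rw [hc, mul_assoc]
      · refine Or.inl ⟨e, mul_left_cancel₀ hp.ne_zero ?_⟩
        rw [hc]; ring
    · exact Or.inl ((hp.dvd_mul_left).1 ⟨c, hc⟩)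
  · rintro (h | ⟨e, he, rfl⟩)
    · exact h.mul_left p
    · exact mul_dvd_mul_left p he

/-- Runs through a list of factors, updating a pair `(m, L)` of the product so far and the list of
its divisors; the value is `none` as soon as some factor is rejected by `good`. -/
def divFold {A : Type} [CommRing A] (good : A → Bool) (s : Option (A × List A)) (l : List A) :
    Option (A × List A) :=
  l.foldl (fun s p => bif good p then s.map (fun q => (p * q.1, q.2 ++ q.2.map (p * ·)))
    else none) s

theorem divFold_of_all_good {A : Type} [CommRing A] {good : A → Bool} (l : List A)
    (hl : ∀ p ∈ l, good p = true) (m : A) (L : List A) :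
    ∃ L', divFold good (some (m, L)) l = some (l.prod * m, L') := by
  induction l generalizing m L with
  | nil => exact ⟨L, by simp [divFold]⟩
  | cons p l ih =>
    obtain ⟨L', h⟩ := ih (fun x hx => hl x (List.mem_cons_of_mem _ hx)) (p * m)
      (L ++ L.map (p * ·))
    refine ⟨L', ?_⟩
    have hp := hl p List.mem_cons_self
    simp only [divFold, List.foldl_cons, hp, cond_true, Option.map_some] at h ⊢
    rw [h, List.prod_cons]
    congr 2
    ring

section Factorization

variable {A : Type} [CommRing A] [IsDomain A] [UniqueFactorizationMonoid A] {good : A → Bool}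

theorem divFold_correct (hgood : ∀ p, good p = true → Irreducible p ∨ IsUnit p ∨ p = 0)
    (l : List A) (s : Option (A × List A))
    (hs : ∀ q ∈ s, q.1 ≠ 0 → ∀ d, d ∈ q.2 ↔ d ∣ q.1) :
    ∀ q ∈ divFold good s l, q.1 ≠ 0 → ∀ d, d ∈ q.2 ↔ d ∣ q.1 := by
  induction l generalizing s with
  | nil => simpa [divFold] using hs
  | cons p l ih =>
    refine ih _ ?_
    cases hp : good p with
    | false => simp [hp]
    | true =>
      intro q hq hq0 d
      simp only [hp, cond_true, Option.mem_def, Option.map_eq_some_iff] at hq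
      obtain ⟨r, hr, rfl⟩ := hq
      have hp0 : p ≠ 0 := left_ne_zero_of_mul hq0
      have hpp : Prime p ∨ IsUnit p := by
        rcases hgood p hp with h | h | h
        · exact Or.inl h.prime
        · exact Or.inr h
        · exact absurd h hp0
      have hL := hs r hr (right_ne_zero_of_mul hq0)
      simp [dvd_mul_iff_of_prime_or_isUnit hpp, hL]

theorem exists_good_list (hgood : ∀ p, Irreducible p ∨ IsUnit p ∨ p = 0 → good p = true) (a : A) :
    ∃ l : List A, (∀ p ∈ l, good p = true) ∧ l.prod = a := by
  induction a using UniqueFactorizationMonoid.induction_on_prime with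
  | h₁ => exact ⟨[0], by simpa using hgood 0 (by simp), by simp⟩
  | h₂ u hu => exact ⟨[u], by simpa using hgood u (Or.inr (Or.inl hu)), by simp⟩
  | h₃ a p _ hp ih =>
    obtain ⟨l, hl, rfl⟩ := ih
    refine ⟨p :: l, ?_, by simp⟩
    simpa using ⟨hgood p (Or.inl hp.irreducible), hl⟩

end Factorization

theorem computable_divFold {A : Type} [Primcodable A] [CommRing A]
    (hmul : Computable₂ (fun a b : A => a * b)) {good : A → Bool} (hgood : Computable good)
    (s : Option (A × List A)) : Computable (divFold good s) := by
  refine computable_list_foldl (f := fun l : List A => l) (g := fun _ => s)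
    (h := fun _ s p => bif good p then s.map (fun q => (p * q.1, q.2 ++ q.2.map (p * ·)))
      else none) Computable.id (Computable.const s) ?_
  have hp : Computable fun x : List A × Option (A × List A) × A => x.2.2 :=
    Computable.snd.comp Computable.snd
  refine Computable.cond (hgood.comp hp) ?_ (Computable.const none)
  refine Computable.option_map (Computable.fst.comp Computable.snd) ?_
  have hp' : Computable fun y : (List A × Option (A × List A) × A) × A × List A => y.1.2.2 :=
    hp.comp Computable.fst
  have hL : Computable fun y : (List A × Option (A × List A) × A) × A × List A => y.2.2 :=
    Computable.snd.comp Computable.snd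
  refine Computable.pair (hmul.comp hp' (Computable.fst.comp Computable.snd)) ?_
  refine Computable.list_append.comp hL (computable_list_map hL ?_)
  exact hmul.comp (hp'.comp Computable.fst) Computable.snd

/-- If a computable integral domain `A` is a UFD with finitely many units and a
computable set of irreducible elements, then `A` can be equipped with a computable
divisor function making it a strongly computable finite factorization domain. -/
theorem stmt_6 {A : Type} [Primcodable A] [CommRing A] [IsDomain A]
    [UniqueFactorizationMonoid A]
    (hadd : Computable₂ (fun a b : A => a + b))
    (hmul : Computable₂ (fun a b : A => a * b))
    (hunits : {u : A | IsUnit u}.Finite)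
    (hirr : ComputablePred (fun a : A => Irreducible a)) :
    ∃ D : A → List A, Computable D ∧
      ∀ a : A, a ≠ 0 → ∀ d : A, d ∈ D a ↔ d ∣ a := by
  classical
  set U : List A := hunits.toFinset.toList with hU_def
  have hU : ∀ u, u ∈ U ↔ IsUnit u := by simp [hU_def]
  obtain ⟨irr, hirr_comp, hirr_eq⟩ := ComputablePred.computable_iff.1 hirr
  have hirr_iff : ∀ p, irr p = true ↔ Irreducible p := fun p => by
    simpa using (congrFun hirr_eq p).symm
  let good : A → Bool := fun p => bif irr p then true else decide (p ∈ 0 :: U)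
  have hgood_comp : Computable good :=
    Computable.cond hirr_comp (Computable.const true) (computable_decide_mem _)
  have hgood : ∀ p, good p = true ↔ Irreducible p ∨ IsUnit p ∨ p = 0 := by
    intro p
    rw [← hirr_iff]
    cases h : irr p <;> simp [good, h, hU, or_comm]
  -- The `n`-th step of the search tests whether `n` codes an admissible factorization of `a`.
  let step : A → ℕ → Option (List A) := fun a n =>
    (Encodable.decode (α := List A) n).bind fun l =>
      (divFold good (some (1, U)) l).bind fun q => bif decide (q.1 = a) then some q.2 else none
  have hstep : Computable₂ step := by
    refine Computable.option_bind (Computable.decode.comp Computable.snd) ?_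
    refine Computable.option_bind
      ((computable_divFold hmul hgood_comp _).comp Computable.snd) ?_
    have hL : Computable fun y : ((A × ℕ) × List A) × A × List A => y.2 := Computable.snd
    have ha : Computable fun y : ((A × ℕ) × List A) × A × List A => y.1.1.1 :=
      Computable.fst.comp (Computable.fst.comp Computable.fst)
    refine Computable.cond ?_ (Computable.option_some.comp (Computable.snd.comp hL))
      (Computable.const none)
    exact (Primrec.eq (α := A)).decide.to_comp.comp (Computable.fst.comp hL) ha
  have hdom : ∀ a, (Nat.rfindOpt (step a)).Dom := by
    intro a
    obtain ⟨l, hl, rfl⟩ := exists_good_list (fun p => (hgood p).2) a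
    obtain ⟨L', hL'⟩ := divFold_of_all_good l hl 1 U
    exact Nat.rfindOpt_dom.2 ⟨Encodable.encode l, L', by simp [step, hL']⟩
  refine ⟨fun a => (Nat.rfindOpt (step a)).get (hdom a),
    (Partrec.rfindOpt hstep).of_eq_tot fun a => Part.get_mem _, fun a ha d => ?_⟩
  obtain ⟨n, hn⟩ := Nat.rfindOpt_spec (Part.get_mem (hdom a))
  simp only [step, Option.mem_def, Option.bind_eq_some_iff] at hn
  obtain ⟨l, -, q, hq, hqa⟩ := hn
  by_cases hqe : q.1 = a
  · simp only [hqe, decide_true, cond_true, Option.some.injEq] at hqa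
    have := divFold_correct (fun p => (hgood p).1) l (some (1, U))
      (by simp [hU, isUnit_iff_dvd_one]) q hq (hqe ▸ ha) d
    rw [hqa, hqe] at this
    exact this
  · simp [hqe] at hqa
end

section
/- Let A be an integral domain in which every nonzero element has only finitely many divisors (i.e., for every a ≠ 0 in A, the set {d : A | d ∣ a} is finite). Then for all a, b ∈ A with b ≠ 0, there exist c, d ∈ A with d ≠ 0, with a * d = b * c (so that a/b = c/d in the field of fractions), and such that every common divisor of c and d is a unit (for all t ∈ A, if t ∣ c and t ∣ d then IsUnit t). -/
/-! If `a` and `b` have a non-unit common divisor `t`, cancel it: `a = t * a'`, `b = t * b'`.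
The divisors of `b'` form a proper subset of those of `b`, since `b ∣ b'` would make `t` a unit.
As `b` has finitely many divisors, induction on their number shows that cancelling
terminates, and it can only stop at a fraction in lowest terms. -/

/-- In an integral domain in which every nonzero element has only finitely many
divisors, every fraction `a/b` (with `b ≠ 0`) can be reduced to lowest terms: there
are `c, d` with `d ≠ 0`, `a * d = b * c`, and every common divisor of `c` and `d` a unit. -/
theorem stmt_7 {A : Type*} [CommRing A] [IsDomain A]
    (hfin : ∀ a : A, a ≠ 0 → {d : A | d ∣ a}.Finite)
    (a b : A) (hb : b ≠ 0) :
    ∃ c d : A, d ≠ 0 ∧ a * d = b * c ∧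
      ∀ t : A, t ∣ c → t ∣ d → IsUnit t := by
  induction hn : {d : A | d ∣ b}.ncard using Nat.strong_induction_on generalizing a b with
  | _ n ih =>
    by_cases h : ∀ t : A, t ∣ a → t ∣ b → IsUnit t
    · exact ⟨a, b, hb, mul_comm a b, h⟩
    · push Not at h
      obtain ⟨t, ⟨a', rfl⟩, ⟨b', rfl⟩, ht⟩ := h
      have hb' : b' ≠ 0 := right_ne_zero_of_mul hb
      have hlt : {d : A | d ∣ b'}.ncard < n := by
        rw [← hn]
        refine Set.ncard_lt_ncard ⟨fun d hd => Dvd.dvd.mul_left hd t, fun hsub => ht ?_⟩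
          (hfin _ hb)
        obtain ⟨s, hs⟩ : t * b' ∣ b' := hsub (dvd_refl (t * b'))
        refine IsUnit.of_mul_eq_one s (mul_left_cancel₀ hb' ?_)
        linear_combination -hs
      obtain ⟨c, d, hd, hcd, hu⟩ := ih _ hlt a' b' hb' rfl
      exact ⟨c, d, hd, by linear_combination t * hcd, hu⟩
end

section
/- Let A be an infinite integral domain in which every nonzero element has only finitely many divisors (i.e., for every a ≠ 0 in A, the set {d : A | d ∣ a} is finite). Then the polynomial ring A[x] has the same property: for every nonzero polynomial f ∈ A[x], the set {g : A[x] | g ∣ f} of divisors of f in A[x] is finite. -/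
/-!
Since `A` is infinite, there are `deg f + 1` points of `A` at which `f` does not vanish. A divisor
`g` of `f` has degree at most `deg f`, so it is determined by its values at these points; and each
value `g(x)` divides the nonzero element `f(x)`, leaving only finitely many possibilities.
-/

/-- If `A` is an infinite integral domain in which every nonzero element has only
finitely many divisors, then every nonzero polynomial over `A` has only finitely many
divisors in `A[x]`. -/
theorem stmt_8 {A : Type*} [CommRing A] [IsDomain A] [Infinite A]
    (hfin : ∀ a : A, a ≠ 0 → {d : A | d ∣ a}.Finite)
    (f : Polynomial A) (hf : f ≠ 0) :
    {g : Polynomial A | g ∣ f}.Finite := by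
  have hroots : {x : A | f.IsRoot x}ᶜ.Infinite :=
    (Polynomial.finite_setOfPred_isRoot hf).infinite_compl
  obtain ⟨s, hs, hcard⟩ := hroots.exists_subset_card_eq (f.natDegree + 1)
  have hvals : (Set.univ.pi fun x : s => {d : A | d ∣ f.eval (x : A)}).Finite :=
    Set.Finite.pi fun x => hfin _ (hs x.2)
  refine Set.Finite.of_injOn (f := fun g (x : s) => g.eval (x : A)) ?_ ?_ hvals
  · intro g hg x _
    exact Polynomial.eval_dvd hg
  · intro g hg h hh hgh
    have hdeg : ∀ p : Polynomial A, p ∣ f → p.degree < s.card := fun p hp => by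
      rw [hcard]
      refine (Polynomial.degree_le_of_dvd hp hf).trans_lt ?_
      exact Polynomial.degree_le_natDegree.trans_lt (by exact_mod_cast Nat.lt_succ_self _)
    exact Polynomial.eq_of_degrees_lt_of_eval_finset_eq s (hdeg g hg) (hdeg h hh)
      fun x hx => congrFun hgh ⟨x, hx⟩
end

section
/- Let A, F, ι, q, B be as in the context. Then the divisors of any element of A are the same computed in A or in B: for all a, b ∈ A, b divides a in A if and only if the constant polynomial C(ι b), regarded as an element of the subring B, divides the constant polynomial C(ι a) in B. -/
/-- Let `A` be an integral domain with fraction field `F`, `q ∈ A` prime, and let `B` be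
the subring of `F[x]` of polynomials `a₀ + a₁x + (a₂/q²)x² + ⋯ + (aₙ/qⁿ)xⁿ` with all
`aᵢ ∈ A`.  Then for `a, b ∈ A`, `b` divides `a` in `A` iff `C(ι b)` divides `C(ι a)` in `B`. -/
theorem stmt_9 {A : Type*} [CommRing A] [IsDomain A]
    (q : A) (hq : Prime q)
    (B : Subring (Polynomial (FractionRing A)))
    (hB : ∀ f : Polynomial (FractionRing A), f ∈ B ↔
      (f.coeff 0 ∈ Set.range (algebraMap A (FractionRing A)) ∧
       f.coeff 1 ∈ Set.range (algebraMap A (FractionRing A)) ∧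
       ∀ n : ℕ, 2 ≤ n →
         (algebraMap A (FractionRing A) q) ^ n * f.coeff n ∈
           Set.range (algebraMap A (FractionRing A))))
    (hmem : ∀ a : A, Polynomial.C (algebraMap A (FractionRing A) a) ∈ B)
    (a b : A) :
    b ∣ a ↔
      (⟨Polynomial.C (algebraMap A (FractionRing A) b), hmem b⟩ : B) ∣
        (⟨Polynomial.C (algebraMap A (FractionRing A) a), hmem a⟩ : B) := by
  constructor
  · rintro ⟨c, rfl⟩
    exact ⟨⟨Polynomial.C (algebraMap A (FractionRing A) c), hmem c⟩, Subtype.ext (by simp)⟩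
  · rintro ⟨⟨g, hg⟩, h⟩
    -- Comparing constant coefficients suffices: that of any element of `B` lies in `A`.
    obtain ⟨c, hc⟩ := ((hB g).1 hg).1
    have h0 := congrArg (fun f : B => (f : Polynomial (FractionRing A)).coeff 0) h
    refine ⟨c, IsFractionRing.injective A (FractionRing A) ?_⟩
    simpa [← hc] using h0
end

section
/- Let A, F, ι, q, B be as in the context. Then the units of B are exactly the images of the units of A: an element f of the subring B is a unit of B if and only if there exists a unit u of A such that f is the constant polynomial C(ι u). -/
/-!
A unit of `B` is a unit of `F[x]`, hence constant, and equal to its coefficient at `0`, which lies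
in `A`. The same holds for its inverse, so the two constants are mutually inverse in `A` by
injectivity of `A → F`. Conversely, if `u * v = 1` in `A`, the constant `C(ι v)` lies in `B` and
inverts `C(ι u)`.
-/

/-- Let `A` be an integral domain with fraction field `F`, `q ∈ A` prime, and let `B` be
the subring of `F[x]` of polynomials `a₀ + a₁x + (a₂/q²)x² + ⋯ + (aₙ/qⁿ)xⁿ` with all
`aᵢ ∈ A`.  The units of `B` are exactly the constant polynomials `C(ι u)` with `u` a
unit of `A`. -/
theorem stmt_10 {A : Type*} [CommRing A] [IsDomain A]
    (q : A) (hq : Prime q)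
    (B : Subring (Polynomial (FractionRing A)))
    (hB : ∀ f : Polynomial (FractionRing A), f ∈ B ↔
      (f.coeff 0 ∈ Set.range (algebraMap A (FractionRing A)) ∧
       f.coeff 1 ∈ Set.range (algebraMap A (FractionRing A)) ∧
       ∀ n : ℕ, 2 ≤ n →
         (algebraMap A (FractionRing A) q) ^ n * f.coeff n ∈
           Set.range (algebraMap A (FractionRing A))))
    (f : B) :
    IsUnit f ↔ ∃ u : A, IsUnit u ∧
      (f : Polynomial (FractionRing A)) =
        Polynomial.C (algebraMap A (FractionRing A) u) := by
  constructor
  · intro hf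
    obtain ⟨g, hfg⟩ := isUnit_iff_exists_inv.mp hf
    have hmul : (f : Polynomial (FractionRing A)) * g = 1 := congrArg Subtype.val hfg
    obtain ⟨a, ha⟩ := ((hB f).mp f.2).1
    obtain ⟨b, hb⟩ := ((hB g).mp g.2).1
    refine ⟨a, ?_, ?_⟩
    · refine IsUnit.of_mul_eq_one b (IsFractionRing.injective A (FractionRing A) ?_)
      rw [map_mul, map_one, ha, hb, ← Polynomial.mul_coeff_zero, hmul, Polynomial.coeff_one_zero]
    · -- a unit of `F[x]` is constant because `F` is a field
      rw [ha]
      exact Polynomial.eq_C_of_degree_eq_zero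
        (Polynomial.degree_eq_zero_of_isUnit (IsUnit.of_mul_eq_one _ hmul))
  · rintro ⟨u, hu, hfu⟩
    obtain ⟨v, huv⟩ := isUnit_iff_exists_inv.mp hu
    have hv : Polynomial.C (algebraMap A (FractionRing A) v) ∈ B := by
      refine (hB _).mpr ⟨⟨v, by simp⟩, ⟨0, by simp⟩, fun n hn => ⟨0, ?_⟩⟩
      simp [Polynomial.coeff_C, show n ≠ 0 by lia]
    refine IsUnit.of_mul_eq_one ⟨_, hv⟩ (Subtype.ext ?_)
    simp [hfu, ← map_mul, huv]
end

section
/- Let A, F, ι, q, B be as in the context. If p ∈ A is irreducible in A, then the constant polynomial C(ι p), regarded as an element of the subring B, is irreducible in B. -/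
/-!
Constants embed `A` into `B`, and the constant coefficient of an element of `B` lies in `A`.
Since `F[x]` is a domain, both factors of a nonzero constant have degree `0`, so every
factorization of `C (ι p)` in `B` is the image of a factorization `p = a * b` in `A`, where
`a` or `b` is a unit. Similarly, comparing constant coefficients shows that an inverse of
`C (ι p)` in `B` would yield an inverse of `p` in `A`.
-/

/-- Let `A` be an integral domain with fraction field `F`, `q ∈ A` prime, and let `B` be
the subring of `F[x]` of polynomials `a₀ + a₁x + (a₂/q²)x² + ⋯ + (aₙ/qⁿ)xⁿ` with all
`aᵢ ∈ A`.  If `p` is irreducible in `A`, then `C(ι p)` is irreducible in `B`. -/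
theorem stmt_11 {A : Type*} [CommRing A] [IsDomain A]
    (q : A) (hq : Prime q)
    (B : Subring (Polynomial (FractionRing A)))
    (hB : ∀ f : Polynomial (FractionRing A), f ∈ B ↔
      (f.coeff 0 ∈ Set.range (algebraMap A (FractionRing A)) ∧
       f.coeff 1 ∈ Set.range (algebraMap A (FractionRing A)) ∧
       ∀ n : ℕ, 2 ≤ n →
         (algebraMap A (FractionRing A) q) ^ n * f.coeff n ∈
           Set.range (algebraMap A (FractionRing A))))
    (hmem : ∀ a : A, Polynomial.C (algebraMap A (FractionRing A) a) ∈ B)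
    (p : A) (hp : Irreducible p) :
    Irreducible (⟨Polynomial.C (algebraMap A (FractionRing A) p), hmem p⟩ : B) := by
  have inj := IsFractionRing.injective A (FractionRing A)
  have unit_const : ∀ a : A, IsUnit a →
      IsUnit (⟨Polynomial.C (algebraMap A (FractionRing A) a), hmem a⟩ : B) := by
    intro a ha
    obtain ⟨b, hb⟩ := ha.exists_right_inv
    refine IsUnit.of_mul_eq_one ⟨Polynomial.C (algebraMap A (FractionRing A) b), hmem b⟩ ?_
    apply Subtype.ext
    simp [← map_mul, hb]
  constructor
  · intro hu
    obtain ⟨⟨g, hg⟩, h⟩ := hu.exists_right_inv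
    obtain ⟨b, hb⟩ := ((hB g).1 hg).1
    have h0 := congrArg (fun f : B => (f : Polynomial (FractionRing A)).coeff 0) h
    simp only [Subring.coe_mul, Subring.coe_one, Polynomial.coeff_C_mul,
      Polynomial.coeff_one_zero, ← hb, ← map_mul] at h0
    exact hp.not_isUnit (IsUnit.of_mul_eq_one b (inj (h0.trans (map_one _).symm)))
  · rintro ⟨f, hf⟩ ⟨g, hg⟩ h
    obtain ⟨a, ha⟩ := ((hB f).1 hf).1
    obtain ⟨b, hb⟩ := ((hB g).1 hg).1
    have hfg : Polynomial.C (algebraMap A (FractionRing A) p) = f * g := congrArg Subtype.val h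
    have hne : f * g ≠ 0 := by
      rw [← hfg, Ne, Polynomial.C_eq_zero, map_eq_zero_iff _ inj]
      exact hp.ne_zero
    have hdeg := Polynomial.natDegree_mul (left_ne_zero_of_mul hne) (right_ne_zero_of_mul hne)
    rw [← hfg, Polynomial.natDegree_C] at hdeg
    have hfC : f = Polynomial.C (algebraMap A (FractionRing A) a) := by
      rw [ha]; exact Polynomial.eq_C_of_natDegree_eq_zero (by omega)
    have hgC : g = Polynomial.C (algebraMap A (FractionRing A) b) := by
      rw [hb]; exact Polynomial.eq_C_of_natDegree_eq_zero (by omega)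
    subst hfC hgC
    have hpab : p = a * b := by
      rw [← Polynomial.C_mul, ← map_mul] at hfg
      exact inj (Polynomial.C_injective hfg)
    exact (hp.isUnit_or_isUnit hpab).imp (unit_const a) (unit_const b)
end

section
/- Let A, F, ι, q, B be as in the context. If p₁, p₂ ∈ A are irreducible in A and are not associates in A, then the constant polynomials C(ι p₁) and C(ι p₂), regarded as elements of the subring B, are not associates in B. -/
/-- Let `A` be an integral domain with fraction field `F`, `q ∈ A` prime, and let `B` be
the subring of `F[x]` of polynomials `a₀ + a₁x + (a₂/q²)x² + ⋯ + (aₙ/qⁿ)xⁿ` with all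
`aᵢ ∈ A`.  If `p₁, p₂` are irreducible in `A` and not associates in `A`, then `C(ι p₁)`
and `C(ι p₂)` are not associates in `B`. -/
theorem stmt_12 {A : Type*} [CommRing A] [IsDomain A]
    (q : A) (hq : Prime q)
    (B : Subring (Polynomial (FractionRing A)))
    (hB : ∀ f : Polynomial (FractionRing A), f ∈ B ↔
      (f.coeff 0 ∈ Set.range (algebraMap A (FractionRing A)) ∧
       f.coeff 1 ∈ Set.range (algebraMap A (FractionRing A)) ∧
       ∀ n : ℕ, 2 ≤ n →
         (algebraMap A (FractionRing A) q) ^ n * f.coeff n ∈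
           Set.range (algebraMap A (FractionRing A))))
    (hmem : ∀ a : A, Polynomial.C (algebraMap A (FractionRing A) a) ∈ B)
    (p₁ p₂ : A) (hp₁ : Irreducible p₁) (hp₂ : Irreducible p₂)
    (hassoc : ¬ Associated p₁ p₂) :
    ¬ Associated
        (⟨Polynomial.C (algebraMap A (FractionRing A) p₁), hmem p₁⟩ : B)
        (⟨Polynomial.C (algebraMap A (FractionRing A) p₂), hmem p₂⟩ : B) := by
  -- Divisibility of constants in `B` descends to `A` by comparing constant coefficients.
  have key : ∀ a b : A,
      (⟨Polynomial.C (algebraMap A (FractionRing A) a), hmem a⟩ : B) ∣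
        ⟨Polynomial.C (algebraMap A (FractionRing A) b), hmem b⟩ → a ∣ b := by
    rintro a b ⟨⟨f, hf⟩, h⟩
    obtain ⟨c, hc⟩ := ((hB f).1 hf).1
    have h0 := congrArg (fun g : B => (g : Polynomial (FractionRing A)).coeff 0) h
    simp only [Subring.coe_mul, Polynomial.coeff_C_mul, Polynomial.coeff_C_zero, ← hc,
      ← map_mul] at h0
    exact ⟨c, IsFractionRing.injective A (FractionRing A) h0⟩
  intro h
  exact hassoc (associated_of_dvd_dvd (key _ _ h.dvd) (key _ _ h.symm.dvd))
end

section
/- Let A, F, ι, q, B be as in the context. Then the constant polynomial C(ι q), regarded as an element of the subring B, is not prime in B. -/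
/-!
The element `q` divides `x * x` in `B`, since `x² = q * (x² / q)` and `x² / q = (q / q²) x²` lies
in `B`. It does not divide `x`, because the linear coefficient of an element of `B` lies in `A`,
while that of `x / q` does not, `q` not being a unit.
-/

/-- Let `A` be an integral domain with fraction field `F`, `q ∈ A` prime, and let `B` be
the subring of `F[x]` of polynomials `a₀ + a₁x + (a₂/q²)x² + ⋯ + (aₙ/qⁿ)xⁿ` with all
`aᵢ ∈ A`.  Then `C(ι q)` is not prime in `B`. -/
theorem stmt_13 {A : Type*} [CommRing A] [IsDomain A]
    (q : A) (hq : Prime q)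
    (B : Subring (Polynomial (FractionRing A)))
    (hB : ∀ f : Polynomial (FractionRing A), f ∈ B ↔
      (f.coeff 0 ∈ Set.range (algebraMap A (FractionRing A)) ∧
       f.coeff 1 ∈ Set.range (algebraMap A (FractionRing A)) ∧
       ∀ n : ℕ, 2 ≤ n →
         (algebraMap A (FractionRing A) q) ^ n * f.coeff n ∈
           Set.range (algebraMap A (FractionRing A))))
    (hmem : ∀ a : A, Polynomial.C (algebraMap A (FractionRing A) a) ∈ B) :
    ¬ Prime (⟨Polynomial.C (algebraMap A (FractionRing A) q), hmem q⟩ : B) := by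
  intro hp
  set ι := algebraMap A (FractionRing A) with hι
  have hq0 : ι q ≠ 0 := by
    simpa [hι] using hq.ne_zero
  have hX : (Polynomial.X : Polynomial (FractionRing A)) ∈ B := by
    rw [hB]
    refine ⟨⟨0, by simp⟩, ⟨1, by simp⟩, fun n hn => ⟨0, ?_⟩⟩
    rw [Polynomial.coeff_X_of_ne_one (by omega)]
    simp
  have hY : (Polynomial.C (ι q)⁻¹ * Polynomial.X ^ 2 : Polynomial (FractionRing A)) ∈ B := by
    rw [hB]
    refine ⟨⟨0, by simp⟩, ⟨0, by simp [Polynomial.coeff_X_pow]⟩, fun n _ => ?_⟩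
    rw [Polynomial.coeff_C_mul, Polynomial.coeff_X_pow]
    by_cases h : n = 2
    · subst h
      exact ⟨q, by simp only [if_true]; field_simp⟩
    · exact ⟨0, by simp [h]⟩
  have hdvd : (⟨Polynomial.C (ι q), hmem q⟩ : B) ∣ ⟨Polynomial.X, hX⟩ * ⟨Polynomial.X, hX⟩ := by
    refine ⟨⟨_, hY⟩, Subtype.ext ?_⟩
    change Polynomial.X * Polynomial.X =
      Polynomial.C (ι q) * (Polynomial.C (ι q)⁻¹ * Polynomial.X ^ 2)
    rw [← mul_assoc, ← Polynomial.C_mul, mul_inv_cancel₀ hq0, Polynomial.C_1, one_mul, sq]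
  have hX_dvd : (⟨Polynomial.C (ι q), hmem q⟩ : B) ∣ ⟨Polynomial.X, hX⟩ :=
    (hp.dvd_or_dvd hdvd).elim id id
  obtain ⟨⟨g, hg⟩, hgX⟩ := hX_dvd
  have hgX' : Polynomial.X = Polynomial.C (ι q) * g := congrArg Subtype.val hgX
  obtain ⟨a, ha⟩ := ((hB g).1 hg).2.1
  -- Comparing coefficients of `x` makes `q` a unit of `A`.
  have h1 := congrArg (fun f => Polynomial.coeff f 1) hgX'
  simp only [Polynomial.coeff_X_one, Polynomial.coeff_C_mul, ← ha] at h1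
  rw [← map_mul, ← map_one ι] at h1
  exact hq.not_isUnit (IsUnit.of_mul_eq_one a (IsFractionRing.injective A (FractionRing A) h1).symm)
end

section
/- Let A, F, ι, q, B be as in the context. If p ∈ A is prime in A and p is not an associate of q in A, then the constant polynomial C(ι p), regarded as an element of the subring B, is prime in B. -/
/-!
The substitution `x ↦ q x` embeds `B` into `A[x]`: if `f ∈ B` then `f(qx)` has all its coefficients
in `A`. Since `p` stays prime in `A[x]`, whenever `p` divides `f g` in `B` it divides `f(qx)` or
`g(qx)` in `A[x]`. It remains to descend this divisibility to `B`, i.e. to check that `f / p ∈ B`.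
For the coefficients of index `n ≠ 1` this is immediate; for `n = 1` the information obtained is
`p ∣ q * a₁`, and `p ∤ q` because `p` and `q` are non-associated primes, so `p ∣ a₁`.
-/

/-- Let `A` be an integral domain with fraction field `F`, `q ∈ A` prime, and let `B` be
the subring of `F[x]` of polynomials `a₀ + a₁x + (a₂/q²)x² + ⋯ + (aₙ/qⁿ)xⁿ` with all
`aᵢ ∈ A`.  If `p` is prime in `A` and not an associate of `q` in `A`, then `C(ι p)` is
prime in `B`. -/
theorem stmt_14 {A : Type*} [CommRing A] [IsDomain A]
    (q : A) (hq : Prime q)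
    (B : Subring (Polynomial (FractionRing A)))
    (hB : ∀ f : Polynomial (FractionRing A), f ∈ B ↔
      (f.coeff 0 ∈ Set.range (algebraMap A (FractionRing A)) ∧
       f.coeff 1 ∈ Set.range (algebraMap A (FractionRing A)) ∧
       ∀ n : ℕ, 2 ≤ n →
         (algebraMap A (FractionRing A) q) ^ n * f.coeff n ∈
           Set.range (algebraMap A (FractionRing A))))
    (hmem : ∀ a : A, Polynomial.C (algebraMap A (FractionRing A) a) ∈ B)
    (p : A) (hp : Prime p) (hpq : ¬ Associated p q) :
    Prime (⟨Polynomial.C (algebraMap A (FractionRing A) p), hmem p⟩ : B) := by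
  set ι := algebraMap A (FractionRing A)
  have hinj : Function.Injective ι := IsFractionRing.injective A (FractionRing A)
  have hp0 : ι p ≠ 0 := fun h => hp.ne_zero (hinj (by rw [h, map_zero]))
  have hpq' : ¬ p ∣ q := fun h => hpq ((hp.dvd_prime_iff_associated hq).1 h)
  have lift : ∀ f ∈ B, ∃ P : Polynomial A,
      P.map ι = f.comp (Polynomial.C (ι q) * Polynomial.X) := by
    intro f hf
    obtain ⟨h0, ⟨a, ha⟩, h2⟩ := (hB f).1 hf
    refine (Polynomial.mem_lifts _).1 ((Polynomial.lifts_iff_coeff_lifts _).2 fun n => ?_)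
    rw [Polynomial.comp_C_mul_X_coeff, mul_comm]
    match n with
    | 0 => simpa using h0
    | 1 => exact ⟨q * a, by rw [map_mul, ha, pow_one]⟩
    | n + 2 => exact h2 _ (by omega)
  have descend : ∀ (f : B) (P : Polynomial A),
      P.map ι = f.1.comp (Polynomial.C (ι q) * Polynomial.X) → Polynomial.C p ∣ P →
      (⟨Polynomial.C (ι p), hmem p⟩ : B) ∣ f := by
    rintro ⟨f, hf⟩ P hP ⟨Q, rfl⟩
    have key : ∀ n, ι p * ι (Q.coeff n) = ι q ^ n * f.coeff n := by
      intro n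
      have h := congrArg (fun r => Polynomial.coeff r n) hP
      simp only [Polynomial.map_mul, Polynomial.map_C, Polynomial.coeff_C_mul,
        Polynomial.coeff_map, Polynomial.comp_C_mul_X_coeff] at h
      rw [h, mul_comm]
    have hmem' : Polynomial.C (ι p)⁻¹ * f ∈ B := by
      obtain ⟨-, ⟨a, ha⟩, -⟩ := (hB f).1 hf
      have hdiv : ∀ n, ι q ^ n * (Polynomial.C (ι p)⁻¹ * f).coeff n = ι (Q.coeff n) := by
        intro n
        rw [Polynomial.coeff_C_mul, mul_left_comm, ← key n, inv_mul_cancel_left₀ hp0]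
      refine (hB _).2 ⟨⟨Q.coeff 0, ?_⟩, ?_, fun n _ => ⟨Q.coeff n, (hdiv n).symm⟩⟩
      · simpa using (hdiv 0).symm
      · have hqa : p ∣ q * a := ⟨Q.coeff 1, hinj (by rw [map_mul, map_mul, key 1, ha, pow_one])⟩
        obtain ⟨c, rfl⟩ := (hp.dvd_or_dvd hqa).resolve_left hpq'
        exact ⟨c, by rw [Polynomial.coeff_C_mul, ← ha, map_mul, inv_mul_cancel_left₀ hp0]⟩
    refine ⟨⟨_, hmem'⟩, Subtype.ext ?_⟩
    change f = Polynomial.C (ι p) * (Polynomial.C (ι p)⁻¹ * f)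
    rw [← mul_assoc, ← Polynomial.C_mul, mul_inv_cancel₀ hp0, Polynomial.C_1, one_mul]
  refine ⟨fun h => hp0 (Polynomial.C_eq_zero.1 (congrArg Subtype.val h)), fun h => ?_, ?_⟩
  · obtain ⟨⟨g, hg⟩, hpg⟩ := h.exists_right_inv
    obtain ⟨⟨a, ha⟩, -, -⟩ := (hB g).1 hg
    have h1 : Polynomial.C (ι p) * g = 1 := congrArg Subtype.val hpg
    have h2 := congrArg (fun r => Polynomial.coeff r 0) h1
    simp only [Polynomial.coeff_C_mul, Polynomial.coeff_one_zero] at h2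
    rw [← ha, ← map_mul, ← map_one ι] at h2
    exact hp.not_isUnit (IsUnit.of_mul_eq_one a (hinj h2))
  · rintro f g ⟨⟨r, hr⟩, hfg⟩
    have hfg' : f.1 * g.1 = Polynomial.C (ι p) * r := congrArg Subtype.val hfg
    obtain ⟨P, hP⟩ := lift f.1 f.2
    obtain ⟨Q, hQ⟩ := lift g.1 g.2
    obtain ⟨R, hR⟩ := lift r hr
    have hPQ : P * Q = Polynomial.C p * R := by
      apply Polynomial.map_injective ι hinj
      rw [Polynomial.map_mul, Polynomial.map_mul, hP, hQ, hR, ← Polynomial.mul_comp, hfg',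
        Polynomial.mul_comp, Polynomial.C_comp, Polynomial.map_C]
    exact ((Polynomial.prime_C_iff.2 hp).dvd_or_dvd ⟨R, hPQ⟩).imp
      (descend f P hP) (descend g Q hQ)
end

section
/- Let R, F, ι, A be as in the context. If p is an element of the subring A and p is prime in A, then p is non-constant (its degree as a polynomial in F[x] is positive) and p is irreducible in the polynomial ring F[x]. -/
/-!
Write `F` for the fraction field and `A = R + xR + x²F[x]`.

* A constant prime `r ∈ R` divides `x² = r · (x² / r)` in `A`, hence divides `x`, so `1 / r ∈ R`
  and `r` is a unit: a contradiction.
* If `p(0) = 0`, then for every `c ∈ F` the element `c x p` lies in `A` and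
  `(c x p)² = p · (c² x² p)`, so `p ∣ c x p` in `A`, i.e. `c x ∈ A` and `c ∈ R`. Thus `A = F[x]`,
  where primes are irreducible.
* If `p(0) ≠ 0` and `p = g h` in `F[x]`, then `(x² g) (x² h) = x⁴ p`, so `p` divides, say, `x² g`
  in `A`. Cancelling `g` gives `h ∣ x²`; as `h(0) ≠ 0`, `h` is a unit.
-/

open Polynomial in
/-- If `g h` has nonzero constant term and divides `X² g`, then `h` divides `X²` and is prime to
`X`, hence is a unit. -/
lemma isUnit_of_mul_dvd_X_sq_mul {F : Type*} [Field F] {g h : F[X]}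
    (h0 : (g * h).coeff 0 ≠ 0) (hd : g * h ∣ X ^ 2 * g) : IsUnit h := by
  have hg : g ≠ 0 := by rintro rfl; simp at h0
  have hX : h ∣ X ^ 2 := by
    rw [mul_comm (X ^ 2) g] at hd
    exact (mul_dvd_mul_iff_left hg).1 hd
  have hnd : ¬ X ∣ h := by
    rw [X_dvd_iff]
    intro hz
    exact h0 (by rw [mul_coeff_zero, hz, mul_zero])
  have hcop : IsCoprime h (X ^ 2) :=
    ((irreducible_X.coprime_iff_not_dvd.2 hnd).symm).pow_right
  exact hcop.isUnit_of_dvd' dvd_rfl hX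

open Polynomial in
/-- Let `R` be an integral domain with fraction field `F` and let `A` be the subring
`R + xR + x²F[x]` of `F[x]`.  If `p ∈ A` is prime in `A`, then `p` is non-constant and
irreducible in `F[x]`. -/
theorem stmt_15 {R : Type*} [CommRing R] [IsDomain R]
    (A : Subring (Polynomial (FractionRing R)))
    (hA : ∀ f : Polynomial (FractionRing R), f ∈ A ↔
      (f.coeff 0 ∈ Set.range (algebraMap R (FractionRing R)) ∧
       f.coeff 1 ∈ Set.range (algebraMap R (FractionRing R))))
    (p : A) (hp : Prime p) :
    0 < (p : Polynomial (FractionRing R)).degree ∧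
      Irreducible (p : Polynomial (FractionRing R)) := by
  have hz : (0 : FractionRing R) ∈ Set.range (algebraMap R (FractionRing R)) := ⟨0, map_zero _⟩
  have hone : (1 : FractionRing R) ∈ Set.range (algebraMap R (FractionRing R)) := ⟨1, map_one _⟩
  have hp0 : (p : (FractionRing R)[X]) ≠ 0 := fun h => hp.ne_zero (Subtype.ext h)
  have hX2 : ∀ f : (FractionRing R)[X], X ^ 2 * f ∈ A := fun f => by
    rw [hA, coeff_X_pow_mul', coeff_X_pow_mul']
    simp
  have hXA : (X : (FractionRing R)[X]) ∈ A := by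
    rw [hA]; simp
  have hdeg : 0 < (p : (FractionRing R)[X]).degree := by
    by_contra hd
    obtain ⟨r, hr⟩ : ∃ r, (p : (FractionRing R)[X]) = C r :=
      ⟨_, eq_C_of_degree_le_zero (not_lt.1 hd)⟩
    have hr0 : r ≠ 0 := by rintro rfl; exact hp0 (by simpa using hr)
    have hdvd : p ∣ (⟨X, hXA⟩ : A) * ⟨X, hXA⟩ := by
      refine ⟨⟨X ^ 2 * C r⁻¹, hX2 _⟩, Subtype.ext ?_⟩
      change X * X = (p : (FractionRing R)[X]) * (X ^ 2 * C r⁻¹)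
      have : (C r * C r⁻¹ : (FractionRing R)[X]) = 1 := by
        rw [← C_mul, mul_inv_cancel₀ hr0, C_1]
      rw [hr]
      linear_combination (-X ^ 2) * this
    have hdvd' : p ∣ (⟨X, hXA⟩ : A) := (hp.dvd_or_dvd hdvd).elim id id
    obtain ⟨k, hk⟩ := hdvd'
    have hk' : (X : (FractionRing R)[X]) = C r * (k : (FractionRing R)[X]) := by
      rw [← hr]; exact congrArg Subtype.val hk
    have hk1 : (1 : FractionRing R) = r * (k : (FractionRing R)[X]).coeff 1 := by
      have := congrArg (fun f => coeff f 1) hk'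
      simpa using this
    have hinv : (k : (FractionRing R)[X]).coeff 1 ∈ Set.range (algebraMap R (FractionRing R)) :=
      ((hA _).1 k.2).2
    have hCA : C ((k : (FractionRing R)[X]).coeff 1) ∈ A := by
      rw [hA, coeff_C_zero, coeff_C_of_ne_zero one_ne_zero]
      exact ⟨hinv, hz⟩
    refine hp.not_isUnit (IsUnit.of_mul_eq_one ⟨_, hCA⟩ (Subtype.ext ?_))
    change (p : (FractionRing R)[X]) * C _ = 1
    rw [hr, ← C_mul, ← hk1, C_1]
  refine ⟨hdeg, fun hu => hdeg.ne' (degree_eq_zero_of_isUnit hu), fun g h hgh => ?_⟩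
  by_cases hc : (p : (FractionRing R)[X]).coeff 0 = 0
  · have hsurj : ∀ c : FractionRing R, c ∈ Set.range (algebraMap R (FractionRing R)) := by
      intro c
      obtain ⟨q, hq⟩ := X_dvd_iff.2 hc
      have hmem : C c * X * (p : (FractionRing R)[X]) ∈ A := by
        have : C c * X * (p : (FractionRing R)[X]) = X ^ 2 * (C c * q) := by rw [hq]; ring
        rw [this]; exact hX2 _
      have hdvd : p ∣ (⟨_, hmem⟩ : A) * ⟨_, hmem⟩ := by
        refine ⟨⟨X ^ 2 * (C c ^ 2 * p.1), hX2 _⟩, Subtype.ext ?_⟩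
        change C c * X * p.1 * (C c * X * p.1) = p.1 * (X ^ 2 * (C c ^ 2 * p.1))
        ring
      have hdvd' : p ∣ (⟨_, hmem⟩ : A) := (hp.dvd_or_dvd hdvd).elim id id
      obtain ⟨k, hk⟩ := hdvd'
      have hk' : C c * X * p.1 = p.1 * k.1 := congrArg Subtype.val hk
      have hk2 : C c * X = (k : (FractionRing R)[X]) :=
        mul_left_cancel₀ hp0 (by rw [← hk', mul_comm])
      have := ((hA _).1 k.2).2
      rw [← hk2] at this
      simpa using this
    have hall : ∀ f : (FractionRing R)[X], f ∈ A := fun f => (hA f).2 ⟨hsurj _, hsurj _⟩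
    have hpgh : p = (⟨g, hall g⟩ : A) * ⟨h, hall h⟩ := Subtype.ext hgh
    exact (hp.irreducible.isUnit_or_isUnit hpgh).imp
      (fun hu => hu.map A.subtype) (fun hu => hu.map A.subtype)
  · have hdvd : p ∣ (⟨_, hX2 g⟩ : A) * ⟨_, hX2 h⟩ := by
      refine ⟨⟨X ^ 2 * X ^ 2, hX2 _⟩, Subtype.ext ?_⟩
      change X ^ 2 * g * (X ^ 2 * h) = (p : (FractionRing R)[X]) * (X ^ 2 * X ^ 2)
      rw [hgh]; ring
    rcases hp.dvd_or_dvd hdvd with hd | hd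
    · right
      have := map_dvd A.subtype hd
      change (p : (FractionRing R)[X]) ∣ X ^ 2 * g at this
      rw [hgh] at this hc
      exact isUnit_of_mul_dvd_X_sq_mul hc this
    · left
      have := map_dvd A.subtype hd
      change (p : (FractionRing R)[X]) ∣ X ^ 2 * h at this
      rw [hgh, mul_comm g h] at this hc
      exact isUnit_of_mul_dvd_X_sq_mul hc this
end

section
/- Let R, F, ι, A be as in the context. Let p be an element of the subring A such that p, as a polynomial in F[x], is irreducible in F[x]. Then the following are equivalent: (1) p is prime in A; (2) for all f ∈ F[x], if the product p * f lies in A, then f lies in A; (3) for all g in A, if p divides g in F[x], then p divides g in A. -/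
/-!
The content is that primality of `p` in `A` forces `p * f ∈ A → f ∈ A`. Since `X ^ 2 * F[X] ⊆ A`,
`p` divides `(p * f) * X ^ 2` in `A`, so either `p ∣ p * f` in `A`, which gives `f ∈ A`, or
`p ∣ X ^ 2` in `A`. In the second case `p = c X` with `c ∈ R`, and for every `y ∈ F` the square of
`y X ^ 2` is divisible by `p` in `A`; hence so is `y X ^ 2`, and comparing coefficients of `X ^ 2`
gives `y ∈ R`. Thus `R = F`, `A = F[X]`, and there is nothing to prove.
The other implications follow from cancellation and from primality of `p` in `F[X]`.
-/

/-- Let `R` be an integral domain with fraction field `F` and let `A` be the subring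
`R + xR + x²F[x]` of `F[x]`.  For `p ∈ A` irreducible in `F[x]`, the following are
equivalent: (1) `p` is prime in `A`; (2) whenever `p * f ∈ A` with `f ∈ F[x]`, then
`f ∈ A`; (3) whenever `p` divides `g ∈ A` in `F[x]`, `p` divides `g` in `A`. -/
theorem stmt_16 {R : Type*} [CommRing R] [IsDomain R]
    (A : Subring (Polynomial (FractionRing R)))
    (hA : ∀ f : Polynomial (FractionRing R), f ∈ A ↔
      (f.coeff 0 ∈ Set.range (algebraMap R (FractionRing R)) ∧
       f.coeff 1 ∈ Set.range (algebraMap R (FractionRing R))))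
    (p : A) (hp : Irreducible (p : Polynomial (FractionRing R))) :
    List.TFAE
      [Prime p,
       ∀ f : Polynomial (FractionRing R),
         (p : Polynomial (FractionRing R)) * f ∈ A → f ∈ A,
       ∀ g : A,
         (p : Polynomial (FractionRing R)) ∣ (g : Polynomial (FractionRing R)) →
           p ∣ g] := by
  have hp0 : (p : Polynomial (FractionRing R)) ≠ 0 := hp.ne_zero
  have hX2 : ∀ f : Polynomial (FractionRing R), f * Polynomial.X ^ 2 ∈ A := by
    intro f
    rw [hA]
    exact ⟨⟨0, by simp⟩, ⟨0, by simp [Polynomial.coeff_mul_X_pow']⟩⟩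
  tfae_have 1 → 2 := by
    intro hprime f hf
    have hXA : (Polynomial.X : Polynomial (FractionRing R)) ^ 2 ∈ A := by simpa using hX2 1
    have hdvd : p ∣ (⟨_, hf⟩ : A) * ⟨_, hXA⟩ :=
      ⟨⟨_, hX2 f⟩, Subtype.ext (by simp [mul_assoc])⟩
    rcases hprime.dvd_or_dvd hdvd with ⟨k, hk⟩ | ⟨h, hh⟩
    · have hk' : (p : Polynomial (FractionRing R)) * f = p * k := congrArg Subtype.val hk
      rw [mul_left_cancel₀ hp0 hk']
      exact k.2
    · have hh' : (Polynomial.X : Polynomial (FractionRing R)) ^ 2 = p * h :=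
        congrArg Subtype.val hh
      -- `p` is associated to `X` in `F[X]`, so `p = c X`.
      have hpX : (p : Polynomial (FractionRing R)) ∣ Polynomial.X :=
        hp.prime.dvd_of_dvd_pow ⟨_, hh'⟩
      have hassoc := (hp.associated_of_dvd Polynomial.irreducible_X hpX).symm
      obtain ⟨u, hu⟩ := hassoc
      obtain ⟨c, -, hc⟩ := Polynomial.isUnit_iff.mp u.isUnit
      rw [← hc] at hu
      have hcR : c ∈ Set.range (algebraMap R (FractionRing R)) := by
        have := ((hA _).mp p.2).2
        rw [← hu] at this
        simpa using this
      have hall : ∀ y : FractionRing R, y ∈ Set.range (algebraMap R (FractionRing R)) := by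
        intro y
        have hsq : p ∣ (⟨_, hX2 (Polynomial.C y)⟩ : A) ^ 2 := by
          refine ⟨h * ⟨_, hX2 (Polynomial.C (y ^ 2))⟩, Subtype.ext ?_⟩
          rw [Subring.coe_pow, Subring.coe_mul, Subring.coe_mul]
          rw [← mul_assoc, ← hh', Polynomial.C_pow]
          ring
        obtain ⟨k, hk⟩ := hprime.dvd_of_dvd_pow hsq
        have hk' : Polynomial.C y * Polynomial.X ^ 2 =
            (p : Polynomial (FractionRing R)) * (k : Polynomial (FractionRing R)) :=
          congrArg Subtype.val hk
        have hy := congrArg (fun q => Polynomial.coeff q 2) hk'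
        rw [← hu, mul_comm Polynomial.X, mul_assoc] at hy
        simp only [Polynomial.coeff_C_mul, Polynomial.coeff_X_pow_self, mul_one,
          Polynomial.coeff_X_mul] at hy
        obtain ⟨a, ha⟩ := hcR
        obtain ⟨b, hb⟩ := ((hA _).mp k.2).2
        exact ⟨a * b, by rw [hy, map_mul, ha, hb]⟩
      exact (hA f).mpr ⟨hall _, hall _⟩
  tfae_have 2 → 3 := by
    rintro h g ⟨f, hf⟩
    exact ⟨⟨f, h f (hf ▸ g.2)⟩, Subtype.ext hf⟩
  tfae_have 3 → 1 := by
    intro h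
    refine ⟨fun h0 => hp0 (by simp [h0]), fun hu => hp.not_isUnit (hu.map A.subtype), ?_⟩
    intro a b hab
    have hab' : (p : Polynomial (FractionRing R)) ∣ a * b := map_dvd A.subtype hab
    exact (hp.prime.dvd_or_dvd hab').imp (h a) (h b)
  tfae_finish
end

section
/- Let R, F, ι, A be as in the context, and assume additionally that R is not a field. Then an element p of the subring A is prime in A if and only if p, as a polynomial in F[x], is irreducible in F[x] and its constant coefficient p.coeff 0 equals ι u for some unit u of R. -/
/-!
Write `r` for the constant coefficient of `p`. If `p` is irreducible in `F[x]` and `r` is a unit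
of `R`, then a quotient in `F[x]` of an element of `A` by `p` has its first two coefficients in
`R`, so divisibility by `p` in `A` agrees with divisibility in `F[x]`, where `p` is prime.

Conversely let `p` be prime in `A`.
* `r ≠ 0`: otherwise take a nonzero nonunit `d` of `R`. Then `p` divides `d · (x p / d) = x p`,
  but `p ∣ d` contradicts `r = 0`, and `p ∣ x p / d` would put `1 / d` in `R`.
* `r` is a unit: put `g = p (1 - (p₁ / r) x) / r`, which has constant coefficient `1` and no linear
  term. As `r² g = p (r - p₁ x)`, either `p ∣ g`, which gives `1 / r ∈ R`, or `p ∣ r`. In the latter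
  case `p` is the constant `r`, which divides `x²` in `A`, hence `x`, and again `1 / r ∈ R`.
* `p` is prime in `F[x]`: if `p ∣ f g` there, then `p ∣ (x² f) (x² g)` in `A`, so `p` divides one
  factor, and `p` is coprime to `x`.
-/

open Polynomial

/-- Let `R` be an integral domain that is not a field, with fraction field `F`, and let
`A` be the subring `R + xR + x²F[x]` of `F[x]`.  Then `p ∈ A` is prime in `A` iff `p` is
irreducible in `F[x]` and its constant coefficient is `ι u` for some unit `u` of `R`. -/
theorem stmt_17 {R : Type*} [CommRing R] [IsDomain R] (hR : ¬ IsField R)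
    (A : Subring (Polynomial (FractionRing R)))
    (hA : ∀ f : Polynomial (FractionRing R), f ∈ A ↔
      (f.coeff 0 ∈ Set.range (algebraMap R (FractionRing R)) ∧
       f.coeff 1 ∈ Set.range (algebraMap R (FractionRing R))))
    (p : A) :
    Prime p ↔
      Irreducible (p : Polynomial (FractionRing R)) ∧
      ∃ u : R, IsUnit u ∧
        (p : Polynomial (FractionRing R)).coeff 0 =
          algebraMap R (FractionRing R) u := by
  set ι := algebraMap R (FractionRing R) with hι
  have hinj : Function.Injective ι := IsFractionRing.injective R (FractionRing R)
  have hc1 : ∀ f g : (FractionRing R)[X],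
      (f * g).coeff 1 = f.coeff 0 * g.coeff 1 + f.coeff 1 * g.coeff 0 := fun f g => by
    rw [coeff_mul, Finset.Nat.antidiagonal_succ]; simp
  have hX2 : ∀ f : (FractionRing R)[X], X ^ 2 * f ∈ A := fun f => by
    rw [hA]
    refine ⟨⟨0, ?_⟩, ⟨0, ?_⟩⟩
    · simp
    · simp [coeff_X_pow_mul']
  have hconst : ∀ d : R, C (ι d) ∈ A := fun d => by
    rw [hA]
    exact ⟨⟨d, by simp⟩, ⟨0, by simp⟩⟩
  -- Divisibility in `A`, stated in `F[x]`.
  have hdvd : ∀ a b : A, a ∣ b ↔ ∃ q ∈ A, (b : (FractionRing R)[X]) = a * q := fun a b => by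
    constructor
    · rintro ⟨q, rfl⟩
      exact ⟨q, q.2, by simp⟩
    · rintro ⟨q, hq, h⟩
      exact ⟨⟨q, hq⟩, Subtype.ext h⟩
  have hinv : ∀ d : R, ι d ≠ 0 → (ι d)⁻¹ ∈ Set.range ι → IsUnit d := by
    rintro d hd ⟨e, he⟩
    refine IsUnit.of_mul_eq_one e (hinj ?_)
    rw [map_mul, he, mul_inv_cancel₀ hd, map_one]
  obtain ⟨⟨r, hr⟩, ⟨s, hs⟩⟩ := (hA p).1 p.2
  obtain ⟨P, hP⟩ := p
  simp only at hr hs ⊢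
  constructor
  · intro hp
    have hP0 : P ≠ 0 := fun h => hp.ne_zero (Subtype.ext h)
    -- Primality of `p` in `A`, stated in `F[x]`.
    have key : ∀ a ∈ A, ∀ b ∈ A, ∀ q ∈ A, a * b = P * q →
        (∃ c ∈ A, a = P * c) ∨ (∃ c ∈ A, b = P * c) := by
      intro a ha b hb q hq h
      have := hp.dvd_or_dvd (a := ⟨a, ha⟩) (b := ⟨b, hb⟩) ⟨⟨q, hq⟩, Subtype.ext h⟩
      simpa only [hdvd] using this
    have hXA : (X : (FractionRing R)[X]) ∈ A := (hA X).2 ⟨⟨0, by simp⟩, ⟨1, by simp⟩⟩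
    have hr0 : ι r ≠ 0 := by
      intro h0
      rw [h0] at hr
      obtain ⟨d, hd0, hdu⟩ := Ring.exists_not_isUnit_of_not_isField hR
      have hd0' : ι d ≠ 0 := by rwa [Ne, map_eq_zero_iff ι hinj]
      obtain ⟨Q, hQ⟩ := X_dvd_iff.2 hr.symm
      have hXP : X * P * C (ι d)⁻¹ ∈ A := by
        rw [show X * P * C (ι d)⁻¹ = X ^ 2 * (Q * C (ι d)⁻¹) by rw [hQ]; ring]
        exact hX2 _
      have hCC : C (ι d)⁻¹ * C (ι d) = 1 := by rw [← C_mul, inv_mul_cancel₀ hd0', C_1]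
      rcases key _ hXP _ (hconst d) X hXA
          (by linear_combination (X * P) * hCC) with ⟨c, hc, h⟩ | ⟨c, hc, h⟩
      · have hcX : c = X * C (ι d)⁻¹ := by
          apply mul_left_cancel₀ hP0
          rw [← h]; ring
        have := ((hA c).1 hc).2
        rw [hcX] at this
        rw [coeff_mul_C, coeff_X_one, one_mul] at this
        exact hdu (hinv d hd0' this)
      · have := congrArg (fun f => coeff f 0) h
        simp only [mul_coeff_zero, coeff_C_zero, ← hr, zero_mul] at this
        exact hd0' this
    have hru : IsUnit r := by
      have hCC : C (ι r)⁻¹ * C (ι r) = 1 := by rw [← C_mul, inv_mul_cancel₀ hr0, C_1]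
      have hlin : C (ι r) - C (ι s) * X ∈ A := by
        rw [hA]
        exact ⟨⟨r, by simp⟩, ⟨-s, by simp [coeff_C]⟩⟩
      have hg : P * (C (ι r) - C (ι s) * X) * C ((ι r)⁻¹ ^ 2) ∈ A := by
        rw [hA]
        refine ⟨⟨1, ?_⟩, ⟨0, ?_⟩⟩
        · simp only [mul_coeff_zero, coeff_C_zero, coeff_sub, coeff_X_zero, ← hr, map_one]
          field_simp
          ring
        · rw [coeff_mul_C, hc1, ← hr, ← hs]
          simp [coeff_C]
          left
          ring
      have hC2 : C ((ι r)⁻¹ ^ 2) * C (ι (r ^ 2)) = 1 := by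
        rw [← C_mul, map_pow, ← mul_pow, inv_mul_cancel₀ hr0, one_pow, C_1]
      rcases key _ hg _ (hconst (r ^ 2)) _ hlin
          (by linear_combination (P * (C (ι r) - C (ι s) * X)) * hC2) with
        ⟨c, hc, h⟩ | ⟨c, hc, h⟩
      · have hcX : c = (C (ι r) - C (ι s) * X) * C ((ι r)⁻¹ ^ 2) := by
          apply mul_left_cancel₀ hP0
          rw [← h]; ring
        have := ((hA c).1 hc).1
        rw [hcX] at this
        simp only [mul_coeff_zero, coeff_C_zero, coeff_sub, coeff_X_zero, mul_zero,
          sub_zero] at this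
        rw [show ι r * (ι r)⁻¹ ^ 2 = (ι r)⁻¹ by field_simp] at this
        exact hinv r hr0 this
      · have hPu : IsUnit P := by
          refine isUnit_of_dvd_unit ⟨c, h⟩ (isUnit_C.2 ?_)
          rw [map_pow]
          exact (pow_ne_zero 2 hr0).isUnit
        have hPC : P = C (ι r) := by
          rw [hr]
          exact eq_C_of_natDegree_eq_zero (natDegree_eq_zero_of_isUnit hPu)
        have hx : ∃ c ∈ A, X = P * c := by
          have := key X hXA X hXA (X ^ 2 * C (ι r)⁻¹) (hX2 _)
            (by rw [hPC]; linear_combination (-X ^ 2) * hCC)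
          tauto
        obtain ⟨c, hc, h⟩ := hx
        have h1 := congrArg (fun f => coeff f 1) h
        simp only [hPC, coeff_C_mul, coeff_X_one] at h1
        apply hinv r hr0
        rw [← eq_inv_of_mul_eq_one_right h1.symm]
        exact ((hA c).1 hc).2
    refine ⟨?_, r, hru, hr.symm⟩
    apply Prime.irreducible
    refine ⟨hP0, ?_, ?_⟩
    · intro hPu
      have hPC : P = C (ι r) := by
        rw [hr]
        exact eq_C_of_natDegree_eq_zero (natDegree_eq_zero_of_isUnit hPu)
      obtain ⟨v, hv⟩ := hru.exists_right_inv
      apply hp.not_isUnit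
      refine IsUnit.of_mul_eq_one ⟨C (ι v), hconst v⟩ (Subtype.ext ?_)
      change P * C (ι v) = 1
      rw [hPC, ← C_mul, ← map_mul, hv, map_one, C_1]
    · have hcop : IsCoprime P (X ^ 2) := by
        apply IsCoprime.pow_right
        rw [isCoprime_comm, irreducible_X.coprime_iff_not_dvd, X_dvd_iff, ← hr]
        exact hr0
      rintro f g ⟨h, hh⟩
      rcases key _ (hX2 f) _ (hX2 g) (X ^ 2 * (X ^ 2 * h)) (hX2 _)
          (by linear_combination X ^ 4 * hh) with ⟨c, -, h⟩ | ⟨c, -, h⟩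
      · exact Or.inl (hcop.dvd_of_dvd_mul_left ⟨c, h⟩)
      · exact Or.inr (hcop.dvd_of_dvd_mul_left ⟨c, h⟩)
  · rintro ⟨hirr, u, hu, hPu⟩
    obtain ⟨v, hv⟩ := hu.exists_right_inv
    have hv' : ι u * ι v = 1 := by rw [← map_mul, hv, map_one]
    have hdiv : ∀ a : A, P ∣ a → (⟨P, hP⟩ : A) ∣ a := by
      rintro a ⟨q, hq⟩
      obtain ⟨⟨a0, h0⟩, ⟨a1, h1⟩⟩ := (hA a).1 a.2
      rw [hq, mul_coeff_zero, hPu] at h0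
      rw [hq, hc1, hPu, ← hs] at h1
      have hq0 : q.coeff 0 = ι (v * a0) := by
        rw [map_mul]
        linear_combination (-ι v) * h0 - q.coeff 0 * hv'
      refine (hdvd _ _).2 ⟨q, (hA q).2 ⟨⟨_, hq0.symm⟩, ⟨v * (a1 - s * (v * a0)), ?_⟩⟩, hq⟩
      rw [map_mul, map_sub, map_mul, ← hq0]
      linear_combination (ι v) * h1 + q.coeff 1 * hv'
    refine ⟨fun h => hirr.ne_zero (congrArg Subtype.val h),
      fun h => hirr.not_isUnit (h.map A.subtype), fun a b hab => ?_⟩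
    obtain ⟨q, -, h⟩ := (hdvd _ _).1 hab
    exact (hirr.prime.dvd_or_dvd (a := (a : (FractionRing R)[X])) (b := b) ⟨q, h⟩).imp
      (hdiv a) (hdiv b)
end

section
/- Let R, F, ι, A be as in the context. For every r ∈ R, the element r is irreducible in R if and only if the constant polynomial C(ι r), regarded as an element of the subring A, is irreducible in A. -/
/-!
The constants give a ring homomorphism `φ : R → A`. It reflects units, because the constant
coefficient of an inverse in `A` lies in `R`; hence irreducibility of `φ r` descends to `r`.
Conversely, for `r ≠ 0` any factorization of `φ r` in `A` has factors of degree `0`, since degrees add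
under multiplication in `F[x]`; elements of `A` of degree `0` are of the form `φ s`,
so the factorization comes from one of `r` in `R`.
-/

/-- Let `R` be an integral domain with fraction field `F` and let `A` be the subring
`R + xR + x²F[x]` of `F[x]`.  For every `r ∈ R`, `r` is irreducible in `R` iff the
constant polynomial `C(ι r)` is irreducible in `A`. -/
theorem stmt_18 {R : Type*} [CommRing R] [IsDomain R]
    (A : Subring (Polynomial (FractionRing R)))
    (hA : ∀ f : Polynomial (FractionRing R), f ∈ A ↔
      (f.coeff 0 ∈ Set.range (algebraMap R (FractionRing R)) ∧
       f.coeff 1 ∈ Set.range (algebraMap R (FractionRing R))))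
    (hmem : ∀ r : R, Polynomial.C (algebraMap R (FractionRing R) r) ∈ A)
    (r : R) :
    Irreducible r ↔
      Irreducible (⟨Polynomial.C (algebraMap R (FractionRing R) r), hmem r⟩ : A) := by
  have hinj : Function.Injective (algebraMap R (FractionRing R)) :=
    IsFractionRing.injective R (FractionRing R)
  let φ : R →+* A :=
    (Polynomial.C.comp (algebraMap R (FractionRing R))).codRestrict A hmem
  have hφ : ∀ s, (φ s : Polynomial (FractionRing R)) =
      Polynomial.C (algebraMap R (FractionRing R) s) := fun _ => rfl
  have hφinj : Function.Injective φ := fun s t h =>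
    hinj (Polynomial.C_injective (congrArg Subtype.val h))
  have hloc : IsLocalHom φ := by
    refine ⟨fun s hs => ?_⟩
    obtain ⟨b, hb⟩ := hs.exists_right_inv
    obtain ⟨t, ht⟩ := ((hA b).1 b.2).1
    refine IsUnit.of_mul_eq_one t (hinj ?_)
    have h := congrArg (fun p : A => (p : Polynomial (FractionRing R)).coeff 0) hb
    simpa [hφ, ← ht] using h
  change Irreducible r ↔ Irreducible (φ r)
  refine ⟨fun hr => ⟨fun hu => hr.not_isUnit (hloc.map_nonunit r hu), fun a b hab => ?_⟩,
    fun h => h.of_map⟩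
  have hconst : ∀ a : A, (a : Polynomial (FractionRing R)).natDegree = 0 → ∃ s, a = φ s := by
    intro a ha
    obtain ⟨s, hs⟩ := ((hA a).1 a.2).1
    refine ⟨s, Subtype.ext ?_⟩
    rw [hφ, hs]
    exact Polynomial.eq_C_of_natDegree_eq_zero ha
  have hne : a * b ≠ 0 := by
    rw [← hab, Ne, map_eq_zero_iff φ hφinj]
    exact hr.ne_zero
  have ha0 : (a : Polynomial (FractionRing R)) ≠ 0 := fun h =>
    left_ne_zero_of_mul hne (Subtype.ext h)
  have hb0 : (b : Polynomial (FractionRing R)) ≠ 0 := fun h =>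
    right_ne_zero_of_mul hne (Subtype.ext h)
  have hdeg : (a : Polynomial (FractionRing R)).natDegree +
      (b : Polynomial (FractionRing R)).natDegree = 0 := by
    rw [← Polynomial.natDegree_mul ha0 hb0, ← Subring.coe_mul, ← hab, hφ,
      Polynomial.natDegree_C]
  obtain ⟨s, rfl⟩ := hconst a (by omega)
  obtain ⟨t, rfl⟩ := hconst b (by omega)
  rw [← map_mul] at hab
  exact (hr.isUnit_or_isUnit (hφinj hab)).imp (fun h => h.map φ) (fun h => h.map φ)
end
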